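/- arXiv:1601.05179 — 3 statements merged into one kernel-verified Lean document; each statement's English description precedes it below -/
import Mathlib

section
/- Let X be Gamma distributed with shape k > 0 and scale θ > 0, and let G(x) = sqrt(k)·γ(x/(kθ)) where γ(x) = sign(x-1)·sqrt(2(x-1-ln x)). Then P(X ≤ x) ≥ Φ(G(x)) for all x > 0. -/
open MeasureTheory

noncomputable def gammaSLL (x : ℝ) : ℝ :=
  if x ≤ 1 then -Real.sqrt (2 * (x - 1 - Real.log x))
  else Real.sqrt (2 * (x - 1 - Real.log x))

noncomputable def stdGaussianCDF (t : ℝ) : ℝ :=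
  ∫ x in Set.Iic t, Real.exp (-x ^ 2 / 2) / Real.sqrt (2 * Real.pi)

open Filter Topology Set

namespace GammaSLL

lemma L_pos {u : ℝ} (hu : 0 < u) (h1 : u ≠ 1) : 0 < u - 1 - Real.log u := by
  have := Real.log_lt_sub_one_of_pos hu h1
  linarith

lemma sll_sq {u : ℝ} (hu : 0 < u) : gammaSLL u ^ 2 = 2 * (u - 1 - Real.log u) := by
  have : 0 ≤ 2 * (u - 1 - Real.log u) := by
    have := Real.log_le_sub_one_of_pos hu
    linarith
  unfold gammaSLL
  split_ifs
  · rw [neg_sq, Real.sq_sqrt this]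
  · rw [Real.sq_sqrt this]

lemma sll_hasDerivAt {u : ℝ} (hu : 0 < u) (h1 : u ≠ 1) :
    HasDerivAt gammaSLL ((u - 1) / (u * gammaSLL u)) u := by
  have hL := L_pos hu h1
  have hs : 0 < Real.sqrt (2 * (u - 1 - Real.log u)) := Real.sqrt_pos.mpr (by linarith)
  have hd : HasDerivAt (fun u : ℝ => Real.sqrt (2 * (u - 1 - Real.log u)))
      ((2 * (1 - u⁻¹)) / (2 * Real.sqrt (2 * (u - 1 - Real.log u)))) u := by
    refine HasDerivAt.sqrt ?_ (by linarith)
    exact (((hasDerivAt_id u).sub_const 1).sub (Real.hasDerivAt_log hu.ne')).const_mul 2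
  rcases lt_or_gt_of_ne h1 with h | h
  · have he : gammaSLL =ᶠ[𝓝 u] fun u => -Real.sqrt (2 * (u - 1 - Real.log u)) := by
      filter_upwards [Iio_mem_nhds h] with v hv
      simp only [gammaSLL, if_pos (le_of_lt (mem_Iio.mp hv))]
    refine (hd.neg.congr_of_eventuallyEq he).congr_deriv ?_
    simp only [gammaSLL, if_pos h.le]
    field_simp
  · have he : gammaSLL =ᶠ[𝓝 u] fun u => Real.sqrt (2 * (u - 1 - Real.log u)) := by
      filter_upwards [Ioi_mem_nhds h] with v hv
      simp only [gammaSLL, if_neg (not_le.mpr (mem_Ioi.mp hv))]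
    refine (hd.congr_of_eventuallyEq he).congr_deriv ?_
    simp only [gammaSLL, if_neg (not_le.mpr h)]
    field_simp

lemma sll_continuousAt {u : ℝ} (hu : 0 < u) : ContinuousAt gammaSLL u := by
  by_cases h1 : u = 1
  · subst h1
    have h0 : gammaSLL 1 = 0 := by simp [gammaSLL]
    rw [ContinuousAt, h0, tendsto_zero_iff_abs_tendsto_zero]
    have he : (abs ∘ gammaSLL) = fun u => Real.sqrt (2 * (u - 1 - Real.log u)) := by
      funext v
      simp only [Function.comp, gammaSLL]
      split_ifs
      · rw [abs_neg, abs_of_nonneg (Real.sqrt_nonneg _)]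
      · rw [abs_of_nonneg (Real.sqrt_nonneg _)]
    rw [he]
    have : ContinuousAt (fun u => Real.sqrt (2 * (u - 1 - Real.log u))) 1 := by
      have := Real.continuousAt_log (x := 1) one_ne_zero
      fun_prop
    simpa [ContinuousAt] using this
  · exact (sll_hasDerivAt hu h1).continuousAt

lemma sll_tendsto_zero : Tendsto gammaSLL (𝓝[>] 0) atBot := by
  have he : gammaSLL =ᶠ[𝓝[>] 0] fun u => -Real.sqrt (2 * (u - 1 - Real.log u)) := by
    filter_upwards [mem_nhdsWithin_of_mem_nhds (Iio_mem_nhds (zero_lt_one (α := ℝ)))] with v hv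
    simp only [gammaSLL, if_pos (le_of_lt (mem_Iio.mp hv))]
  refine Tendsto.congr' he.symm (tendsto_neg_atTop_atBot.comp (Real.tendsto_sqrt_atTop.comp ?_))
  refine Tendsto.const_mul_atTop two_pos ?_
  have h1 : Tendsto (fun u : ℝ => u - 1) (𝓝[>] 0) (𝓝 (0 - 1)) :=
    ((continuous_id.sub continuous_const).tendsto 0).mono_left nhdsWithin_le_nhds
  have h2 : Tendsto (fun u : ℝ => - Real.log u) (𝓝[>] 0) atTop :=
    tendsto_neg_atBot_atTop.comp Real.tendsto_log_nhdsGT_zero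
  simpa [sub_eq_add_neg] using h1.add_atTop h2

lemma sll_tendsto_top : Tendsto gammaSLL atTop atTop := by
  have he : gammaSLL =ᶠ[atTop] fun u => Real.sqrt (2 * (u - 1 - Real.log u)) := by
    filter_upwards [Ioi_mem_atTop 1] with v hv
    simp only [gammaSLL, if_neg (not_le.mpr (mem_Ioi.mp hv))]
  refine Tendsto.congr' he.symm (Real.tendsto_sqrt_atTop.comp ?_)
  refine Tendsto.const_mul_atTop two_pos ?_
  have h2 : Tendsto (fun u : ℝ => u / 2 - 2) atTop atTop :=
    tendsto_atTop_add_const_right _ (-2) (tendsto_id.atTop_div_const two_pos)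
  refine tendsto_atTop_mono' _ ?_ h2
  filter_upwards [Ioi_mem_atTop 0] with v hv
  have hv : 0 < v := hv
  have := Real.log_le_sub_one_of_pos (half_pos hv)
  rw [Real.log_div hv.ne' two_ne_zero] at this
  have := Real.log_two_lt_d9
  linarith

/-! The ratio -/

lemma N_anti : AntitoneOn (fun u : ℝ => u⁻¹ - u + 2 * Real.log u) (Ioi 0) := by
  have hd : ∀ u ∈ Ioi (0:ℝ), HasDerivAt (fun u : ℝ => u⁻¹ - u + 2 * Real.log u)
      (-(u ^ 2)⁻¹ - 1 + 2 * u⁻¹) u := fun u hu =>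
    ((hasDerivAt_inv (ne_of_gt hu)).sub (hasDerivAt_id u)).add
      ((Real.hasDerivAt_log (ne_of_gt hu)).const_mul 2)
  refine antitoneOn_of_deriv_nonpos (convex_Ioi 0)
    (fun u hu => (hd u hu).continuousAt.continuousWithinAt) ?_ ?_
  · rw [interior_Ioi]
    exact fun u hu => (hd u hu).differentiableAt.differentiableWithinAt
  · rw [interior_Ioi]
    intro u hu
    rw [(hd u hu).deriv, ← inv_pow]
    nlinarith [sq_nonneg (u⁻¹ - 1)]

lemma g_mono : MonotoneOn (fun u : ℝ => (u - 1) ^ 2 / 2 - (u - 1) + Real.log u) (Ioi 0) := by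
  have hd : ∀ u ∈ Ioi (0:ℝ), HasDerivAt (fun u : ℝ => (u - 1) ^ 2 / 2 - (u - 1) + Real.log u)
      ((u - 1) ^ 2 / u) u := fun u hu => by
    have hu0 : u ≠ 0 := ne_of_gt hu
    have h := ((((hasDerivAt_id u).sub_const 1).pow 2).div_const 2 |>.sub
      ((hasDerivAt_id u).sub_const 1)).add (Real.hasDerivAt_log hu0)
    refine h.congr_deriv ?_
    simp
    field_simp
    ring
  refine monotoneOn_of_deriv_nonneg (convex_Ioi 0)
    (fun u hu => (hd u hu).continuousAt.continuousWithinAt) ?_ ?_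
  · rw [interior_Ioi]
    exact fun u hu => (hd u hu).differentiableAt.differentiableWithinAt
  · rw [interior_Ioi]
    intro u hu
    rw [(hd u hu).deriv]
    have : (0:ℝ) < u := hu
    positivity

noncomputable def f (u : ℝ) : ℝ := (u - 1 - Real.log u) / (u - 1) ^ 2

lemma f_hasDeriv {u : ℝ} (hu : 0 < u) (h1 : u ≠ 1) :
    HasDerivAt f ((u⁻¹ - u + 2 * Real.log u) / (u - 1) ^ 3) u := by
  have h1' : u - 1 ≠ 0 := sub_ne_zero.mpr h1
  have h := (((hasDerivAt_id u).sub_const 1).sub (Real.hasDerivAt_log hu.ne')).div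
    (((hasDerivAt_id u).sub_const 1).pow 2) (pow_ne_zero 2 h1')
  refine h.congr_deriv ?_
  simp
  field_simp
  ring

lemma f_deriv_nonpos {u : ℝ} (hu : 0 < u) (h1 : u ≠ 1) :
    (u⁻¹ - u + 2 * Real.log u) / (u - 1) ^ 3 ≤ 0 := by
  rcases lt_or_gt_of_ne h1 with h | h
  · have := N_anti (mem_Ioi.mpr hu) (mem_Ioi.mpr one_pos) h.le
    simp at this
    refine div_nonpos_of_nonneg_of_nonpos this ?_
    exact (Odd.pow_neg (by decide) (by linarith)).le
  · have := N_anti (mem_Ioi.mpr one_pos) (mem_Ioi.mpr hu) h.le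
    simp at this
    refine div_nonpos_of_nonpos_of_nonneg this ?_
    exact pow_nonneg (by linarith) 3

lemma f_anti_aux {D : Set ℝ} (hD : Convex ℝ D) (h : ∀ u ∈ D, 0 < u ∧ u ≠ 1) :
    AntitoneOn f D := by
  refine antitoneOn_of_deriv_nonpos hD
    (fun u hu => (f_hasDeriv (h u hu).1 (h u hu).2).continuousAt.continuousWithinAt) ?_ ?_
  · intro u hu
    have := h u (interior_subset hu)
    exact (f_hasDeriv this.1 this.2).differentiableAt.differentiableWithinAt
  · intro u hu
    have := h u (interior_subset hu)
    rw [(f_hasDeriv this.1 this.2).deriv]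
    exact f_deriv_nonpos this.1 this.2

lemma f_anti {s t : ℝ} (hs : 0 < s) (hst : s ≤ t) (hs1 : s ≠ 1) (ht1 : t ≠ 1) : f t ≤ f s := by
  rcases lt_or_gt_of_ne ht1 with h | h
  · exact f_anti_aux (convex_Icc s t)
      (fun u hu => ⟨hs.trans_le hu.1, (hu.2.trans_lt h).ne⟩) ⟨le_rfl, hst⟩ ⟨hst, le_rfl⟩ hst
  rcases lt_or_gt_of_ne hs1 with h' | h'
  · have ht : 0 < t := hs.trans_le hst
    have a := g_mono (mem_Ioi.mpr hs) (mem_Ioi.mpr one_pos) h'.le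
    have b := g_mono (mem_Ioi.mpr one_pos) (mem_Ioi.mpr ht) h.le
    simp at a b
    have ps : 0 < (s - 1) ^ 2 := by have : s - 1 ≠ 0 := sub_ne_zero.mpr hs1
                                    positivity
    have pt : 0 < (t - 1) ^ 2 := by have : t - 1 ≠ 0 := sub_ne_zero.mpr ht1
                                    positivity
    trans (1 / 2)
    · rw [f, div_le_iff₀ pt]; linarith
    · rw [f, le_div_iff₀ ps]; linarith
  · exact f_anti_aux (convex_Icc s t)
      (fun u hu => ⟨hs.trans_le hu.1, (h'.trans_le hu.1).ne'⟩) ⟨le_rfl, hst⟩ ⟨hst, le_rfl⟩ hst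

noncomputable def p (u : ℝ) : ℝ := (u - 1) / gammaSLL u

lemma p_eq {u : ℝ} (h1 : u ≠ 1) : p u = (Real.sqrt (2 * f u))⁻¹ := by
  have h1' : u - 1 ≠ 0 := sub_ne_zero.mpr h1
  have : Real.sqrt (2 * f u) = Real.sqrt (2 * (u - 1 - Real.log u)) / |u - 1| := by
    rw [f, ← mul_div_assoc, Real.sqrt_div' _ (sq_nonneg _), Real.sqrt_sq_eq_abs]
  rw [this, inv_div, p, gammaSLL]
  rcases lt_or_gt_of_ne h1 with h | h
  · rw [if_pos h.le, abs_of_neg (by linarith), div_neg, neg_div]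
  · rw [if_neg (not_le.mpr h), abs_of_pos (by linarith)]

lemma p_mono {s t : ℝ} (hs : 0 < s) (hst : s ≤ t) (hs1 : s ≠ 1) (ht1 : t ≠ 1) : p s ≤ p t := by
  rw [p_eq hs1, p_eq ht1]
  have ht : 0 < t := hs.trans_le hst
  have : 0 < f t := by
    have := L_pos ht ht1
    have h1' : t - 1 ≠ 0 := sub_ne_zero.mpr ht1
    unfold f; positivity
  have := f_anti hs hst hs1 ht1
  gcongr

/-! Abstract argument -/

lemma abstract_nonneg {H H' : ℝ → ℝ} {c : ℝ}
    (hc : ∀ x, 0 < x → ContinuousAt H x)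
    (hd : ∀ x, 0 < x → x ≠ c → HasDerivAt H (H' x) x)
    (hs : ∀ x y, 0 < x → x ≤ y → x ≠ c → y ≠ c → H' x ≤ 0 → H' y ≤ 0)
    (h0 : Tendsto H (𝓝[>] 0) (𝓝 0)) (hi : Tendsto H atTop (𝓝 0)) {x : ℝ} (hx : 0 < x) :
    0 ≤ H x := by
  -- monotonicity across `c`
  have inc0 : ∀ s t, 0 < s → s ≤ t → (∀ r ∈ Ioo s t, r ≠ c ∧ 0 ≤ H' r) → H s ≤ H t := by
    intro s t hs0 hst h
    refine monotoneOn_of_deriv_nonneg (convex_Icc s t)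
      (fun u hu => (hc u (hs0.trans_le hu.1)).continuousWithinAt) ?_ ?_
      ⟨le_rfl, hst⟩ ⟨hst, le_rfl⟩ hst
    · rw [interior_Icc]
      exact fun u hu =>
        (hd u (hs0.trans hu.1) (h u hu).1).differentiableAt.differentiableWithinAt
    · rw [interior_Icc]
      intro u hu
      rw [(hd u (hs0.trans hu.1) (h u hu).1).deriv]
      exact (h u hu).2
  have dec0 : ∀ s t, 0 < s → s ≤ t → (∀ r ∈ Ioo s t, r ≠ c ∧ H' r ≤ 0) → H t ≤ H s := by
    intro s t hs0 hst h
    refine antitoneOn_of_deriv_nonpos (convex_Icc s t)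
      (fun u hu => (hc u (hs0.trans_le hu.1)).continuousWithinAt) ?_ ?_
      ⟨le_rfl, hst⟩ ⟨hst, le_rfl⟩ hst
    · rw [interior_Icc]
      exact fun u hu =>
        (hd u (hs0.trans hu.1) (h u hu).1).differentiableAt.differentiableWithinAt
    · rw [interior_Icc]
      intro u hu
      rw [(hd u (hs0.trans hu.1) (h u hu).1).deriv]
      exact (h u hu).2
  have inc : ∀ s t, 0 < s → s ≤ t → (∀ r ∈ Ioo s t, r ≠ c → 0 ≤ H' r) → H s ≤ H t := by
    intro s t hs0 hst h
    by_cases hm : c ∈ Ioo s t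
    · exact (inc0 s c hs0 hm.1.le fun r hr => ⟨hr.2.ne, h r ⟨hr.1, hr.2.trans hm.2⟩ hr.2.ne⟩).trans
        (inc0 c t (hs0.trans hm.1) hm.2.le fun r hr =>
          ⟨hr.1.ne', h r ⟨hm.1.trans hr.1, hr.2⟩ hr.1.ne'⟩)
    · have hne : ∀ r ∈ Ioo s t, r ≠ c := fun r hr e => hm (e ▸ hr)
      exact inc0 s t hs0 hst fun r hr => ⟨hne r hr, h r hr (hne r hr)⟩
  have dec : ∀ s t, 0 < s → s ≤ t → (∀ r ∈ Ioo s t, r ≠ c → H' r ≤ 0) → H t ≤ H s := by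
    intro s t hs0 hst h
    by_cases hm : c ∈ Ioo s t
    · exact (dec0 c t (hs0.trans hm.1) hm.2.le fun r hr =>
          ⟨hr.1.ne', h r ⟨hm.1.trans hr.1, hr.2⟩ hr.1.ne'⟩).trans
        (dec0 s c hs0 hm.1.le fun r hr => ⟨hr.2.ne, h r ⟨hr.1, hr.2.trans hm.2⟩ hr.2.ne⟩)
    · have hne : ∀ r ∈ Ioo s t, r ≠ c := fun r hr e => hm (e ▸ hr)
      exact dec0 s t hs0 hst fun r hr => ⟨hne r hr, h r hr (hne r hr)⟩
  have main : ∀ x, 0 < x → x ≠ c → 0 ≤ H x := by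
    intro x hx hxc
    by_cases hneg : H' x ≤ 0
    · refine le_of_tendsto hi ?_
      filter_upwards [Ici_mem_atTop x] with t ht
      exact dec x t hx ht fun r hr hrc => hs x r hx hr.1.le hxc hrc hneg
    · refine le_of_tendsto h0 ?_
      filter_upwards [self_mem_nhdsWithin, mem_nhdsWithin_of_mem_nhds (Iio_mem_nhds hx)]
        with s hs0 hsx
      refine inc s x hs0 (le_of_lt hsx) fun r hr hrc => ?_
      by_contra hcon
      exact hneg (hs r x (lt_trans hs0 hr.1) hr.2.le hrc hxc (not_le.mp hcon).le)
  by_cases hxc : x = c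
  · refine ge_of_tendsto ((hc x hx).tendsto.mono_left (nhdsWithin_le_nhds (s := {x}ᶜ))) ?_
    filter_upwards [self_mem_nhdsWithin, mem_nhdsWithin_of_mem_nhds (Ioi_mem_nhds hx)]
      with y hy hy0
    exact main y hy0 (hxc ▸ hy)
  · exact main x hx hxc

/-! Gaussian cdf -/

noncomputable def phi (x : ℝ) : ℝ := Real.exp (-x ^ 2 / 2) / Real.sqrt (2 * Real.pi)

lemma phi_cont : Continuous phi := by unfold phi; fun_prop

lemma phi_eq (x : ℝ) : phi x = Real.exp (-(1/2) * x ^ 2) / Real.sqrt (2 * Real.pi) := by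
  rw [phi]; ring_nf

lemma phi_int : Integrable phi := by
  have := (integrable_exp_neg_mul_sq (b := 1/2) (by norm_num)).div_const (Real.sqrt (2 * Real.pi))
  exact this.congr (ae_of_all _ fun x => (phi_eq x).symm)

lemma phi_total : ∫ x, phi x = 1 := by
  simp_rw [phi_eq]
  rw [integral_div, integral_gaussian, div_eq_one_iff_eq (by positivity)]
  congr 1; field_simp

lemma cdf_eq (t : ℝ) : stdGaussianCDF t = (∫ x in Iic (0:ℝ), phi x) + ∫ x in (0:ℝ)..t, phi x := by
  have := intervalIntegral.integral_Iic_sub_Iic (f := phi) (a := 0) (b := t)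
    phi_int.integrableOn phi_int.integrableOn
  rw [← this]
  simp [stdGaussianCDF, phi]

lemma cdf_deriv (t : ℝ) : HasDerivAt stdGaussianCDF (phi t) t := by
  have : stdGaussianCDF = fun t => (∫ x in Iic (0:ℝ), phi x) + ∫ x in (0:ℝ)..t, phi x :=
    funext cdf_eq
  rw [this]
  exact (phi_cont.integral_hasStrictDerivAt 0 t).hasDerivAt.const_add _

lemma cdf_bot : Tendsto stdGaussianCDF atBot (𝓝 0) := by
  have h := (intervalIntegral_tendsto_integral_Iic (f := phi) 0 phi_int.integrableOn tendsto_id)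
  have h2 := (tendsto_const_nhds (x := ∫ x in Iic (0:ℝ), phi x)).sub h
  rw [sub_self] at h2
  refine h2.congr fun t => ?_
  rw [cdf_eq, intervalIntegral.integral_symm 0 (id t)]
  simp

lemma cdf_top : Tendsto stdGaussianCDF atTop (𝓝 1) := by
  have h := (intervalIntegral_tendsto_integral_Ioi (f := phi) 0 phi_int.integrableOn tendsto_id)
  have h2 := (tendsto_const_nhds (x := ∫ x in Iic (0:ℝ), phi x)).add h
  rw [intervalIntegral.integral_Iic_add_Ioi phi_int.integrableOn phi_int.integrableOn,
    phi_total] at h2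
  exact h2.congr fun t => (cdf_eq t).symm

/-! Gamma cdf -/

noncomputable def gp (k θ t : ℝ) : ℝ :=
  t ^ (k - 1) * Real.exp (-t / θ) / (θ ^ k * Real.Gamma k)

lemma gp_eq (k θ t : ℝ) :
    gp k θ t = t ^ (k - 1) * Real.exp (-(θ⁻¹ * t)) / (θ ^ k * Real.Gamma k) := by
  rw [gp]; congr 3; ring

lemma gp_int {k θ : ℝ} (hk : 0 < k) (hθ : 0 < θ) : IntegrableOn (gp k θ) (Ioi 0) := by
  have h := integrableOn_rpow_mul_exp_neg_mul_rpow (p := 1) (s := k - 1) (b := θ⁻¹)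
    (by linarith) one_pos (by positivity)
  have h2 := h.div_const (θ ^ k * Real.Gamma k)
  refine h2.congr (ae_of_all _ fun t => ?_)
  simp only [gp_eq, Real.rpow_one, neg_mul]

lemma gp_total {k θ : ℝ} (hk : 0 < k) (hθ : 0 < θ) : ∫ t in Ioi (0:ℝ), gp k θ t = 1 := by
  simp_rw [gp_eq]
  have hG := Real.Gamma_pos_of_pos hk
  rw [integral_div, Real.integral_rpow_mul_exp_neg_mul_Ioi hk (by positivity)]
  rw [one_div, inv_inv]
  exact div_self (by positivity)

lemma gp_contAt {k θ t : ℝ} (ht : 0 < t) : ContinuousAt (gp k θ) t := by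
  have := Real.continuousAt_rpow_const t (k - 1) (Or.inl ht.ne')
  unfold gp
  fun_prop

lemma gp_meas (k θ : ℝ) : Measurable (gp k θ) := by
  unfold gp; fun_prop

lemma gp_ii {k θ : ℝ} (hk : 0 < k) (hθ : 0 < θ) {x : ℝ} (hx : 0 ≤ x) :
    IntervalIntegrable (gp k θ) volume 0 x := by
  rw [intervalIntegrable_iff_integrableOn_Ioc_of_le hx]
  exact (gp_int hk hθ).mono_set Ioc_subset_Ioi_self

lemma gcdf_deriv {k θ : ℝ} (hk : 0 < k) (hθ : 0 < θ) {x : ℝ} (hx : 0 < x) :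
    HasDerivAt (fun x => ∫ t in (0:ℝ)..x, gp k θ t) (gp k θ x) x :=
  intervalIntegral.integral_hasDerivAt_right (gp_ii hk hθ hx.le)
    ((gp_meas k θ).stronglyMeasurable.stronglyMeasurableAtFilter) (gp_contAt hx)

lemma gcdf_top {k θ : ℝ} (hk : 0 < k) (hθ : 0 < θ) :
    Tendsto (fun x => ∫ t in (0:ℝ)..x, gp k θ t) atTop (𝓝 1) := by
  rw [← gp_total hk hθ]
  exact intervalIntegral_tendsto_integral_Ioi 0 (gp_int hk hθ) tendsto_id

lemma gcdf_zero {k θ : ℝ} (hk : 0 < k) (hθ : 0 < θ) :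
    Tendsto (fun x => ∫ t in (0:ℝ)..x, gp k θ t) (𝓝[>] 0) (𝓝 0) := by
  have h := intervalIntegral.continuousOn_primitive_interval' (f := gp k θ) (a := 0)
    (gp_ii hk hθ zero_le_one) (by simp)
  have h0 := h 0 (by simp)
  rw [ContinuousWithinAt, intervalIntegral.integral_same] at h0
  refine h0.mono_left ?_
  rw [uIcc_of_le zero_le_one]
  rw [nhdsWithin_le_iff]
  exact Icc_mem_nhdsGT zero_lt_one

/-- common factor -/
noncomputable def E (k θ x : ℝ) : ℝ := Real.exp (k * Real.log x - x / θ - k * Real.log θ)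

lemma gp_E {k θ x : ℝ} (hθ : 0 < θ) (hx : 0 < x) :
    gp k θ x = E k θ x / x * (1 / Real.Gamma k) := by
  rw [gp, E, Real.rpow_sub_one hx.ne', Real.rpow_def_of_pos hx, Real.rpow_def_of_pos hθ,
    Real.exp_sub, Real.exp_sub, neg_div, Real.exp_neg, mul_comm k, mul_comm k]
  field_simp

lemma phi_E {k θ x : ℝ} (hk : 0 < k) (hθ : 0 < θ) (hx : 0 < x) :
    phi (Real.sqrt k * gammaSLL (x / (k * θ))) =
      E k θ x * (Real.exp (k - k * Real.log k) / Real.sqrt (2 * Real.pi)) := by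
  have hu : 0 < x / (k * θ) := by positivity
  rw [phi, E, ← mul_div_assoc, ← Real.exp_add]
  congr 2
  rw [mul_pow, sll_sq hu, Real.sq_sqrt hk.le, Real.log_div hx.ne' (by positivity),
    Real.log_mul hk.ne' hθ.ne']
  field_simp
  ring

end GammaSLL

open GammaSLL in
theorem gamma_sll_dominated (k θ x : ℝ) (hk : 0 < k) (hθ : 0 < θ) (hx : 0 < x) :
    stdGaussianCDF (Real.sqrt k * gammaSLL (x / (k * θ))) ≤
      ∫ t in Set.Ioc (0 : ℝ) x,
        t ^ (k - 1) * Real.exp (-t / θ) / (θ ^ k * Real.Gamma k) := by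
  have hkθ : 0 < k * θ := mul_pos hk hθ
  have hsk : 0 < Real.sqrt k := Real.sqrt_pos.mpr hk
  have hG := Real.Gamma_pos_of_pos hk
  set b : ℝ := Real.exp (k - k * Real.log k) / Real.sqrt (2 * Real.pi) * Real.sqrt k with hb
  have hbpos : 0 < b := by positivity
  have hne : ∀ y, y ≠ k * θ → y / (k * θ) ≠ 1 := fun y hy h =>
    hy ((div_eq_one_iff_eq hkθ.ne').mp h)
  have key := abstract_nonneg
    (H := fun x => (∫ t in (0:ℝ)..x, gp k θ t) -
      stdGaussianCDF (Real.sqrt k * gammaSLL (x / (k * θ))))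
    (H' := fun x => E k θ x / x * (1 / Real.Gamma k - b * p (x / (k * θ)))) (c := k * θ)
    ?_ ?_ ?_ ?_ ?_ hx
  · have h2 := sub_nonneg.mp key
    rw [intervalIntegral.integral_of_le hx.le] at h2
    exact h2
  · intro y hy
    have hu : 0 < y / (k * θ) := by positivity
    refine (gcdf_deriv hk hθ hy).continuousAt.sub ?_
    have h1 : ContinuousAt (fun x => Real.sqrt k * gammaSLL (x / (k * θ))) y := by
      refine continuousAt_const.mul ?_
      exact ContinuousAt.comp' (f := fun x => x / (k * θ)) (sll_continuousAt hu) (by fun_prop)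
    exact ContinuousAt.comp' (f := fun x => Real.sqrt k * gammaSLL (x / (k * θ)))
      (cdf_deriv _).continuousAt h1
  · intro y hy hyc
    have hu : 0 < y / (k * θ) := by positivity
    have h1 := HasDerivAt.comp y (sll_hasDerivAt hu (hne y hyc))
      ((hasDerivAt_id y).div_const (k * θ))
    have h2 := HasDerivAt.comp y (cdf_deriv (Real.sqrt k * gammaSLL (y / (k * θ))))
      (h1.const_mul (Real.sqrt k))
    refine ((gcdf_deriv hk hθ hy).sub h2).congr_deriv ?_
    rw [phi_E hk hθ hy, gp_E hθ hy, hb, p]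
    simp only [id]
    rw [← div_div (y / (k * θ) - 1), div_right_comm _ (y / (k * θ))]
    generalize (y / (k * θ) - 1) / gammaSLL (y / (k * θ)) = q
    field_simp
  · intro s t hs hst hsc htc h
    have ht := hs.trans_le hst
    have e1 : 0 < E k θ s / s := div_pos (Real.exp_pos _) hs
    have e2 : 0 < E k θ t / t := div_pos (Real.exp_pos _) ht
    have hp : p (s / (k * θ)) ≤ p (t / (k * θ)) :=
      p_mono (by positivity) (by gcongr) (hne s hsc) (hne t htc)
    have h3 : 1 / Real.Gamma k - b * p (s / (k * θ)) ≤ 0 := by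
      by_contra hcon
      exact absurd h (not_le.mpr (mul_pos e1 (not_le.mp hcon)))
    refine mul_nonpos_of_nonneg_of_nonpos e2.le ?_
    have := mul_le_mul_of_nonneg_left hp hbpos.le
    linarith
  · have h1 : Tendsto (fun x : ℝ => x / (k * θ)) (𝓝[>] 0) (𝓝[>] 0) := by
      refine tendsto_nhdsWithin_iff.mpr ⟨?_, ?_⟩
      · have : Tendsto (fun x : ℝ => x / (k * θ)) (𝓝 0) (𝓝 (0 / (k * θ))) :=
          (continuous_id.div_const _).tendsto 0
        rw [zero_div] at this
        exact this.mono_left nhdsWithin_le_nhds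
      · filter_upwards [self_mem_nhdsWithin] with y hy
        exact div_pos hy hkθ
    have h2 := (sll_tendsto_zero.comp h1).const_mul_atBot hsk
    have h3 := gcdf_zero hk hθ
    have h4 := h3.sub (cdf_bot.comp h2)
    rw [sub_zero] at h4
    exact h4
  · have h2 := (sll_tendsto_top.comp (tendsto_id.atTop_div_const hkθ)).const_mul_atTop hsk
    have h4 := (gcdf_top hk hθ).sub (cdf_top.comp h2)
    rw [sub_self] at h4
    exact h4
end

section
/- Let L ~ Po(λ) and define the signed log-likelihood G(k) = sign(k-λ)·sqrt(2(k·ln(k/λ) - k + λ)) for k ∈ ℕ (with the convention 0·ln 0 = 0). Then P(L < k) ≤ Φ(G(k)) ≤ P(L ≤ k) for every natural number k. -/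
noncomputable def poissonSLL (lam : ℝ) (k : ℕ) : ℝ :=
  if (k : ℝ) < lam then
    -Real.sqrt (2 * ((k : ℝ) * Real.log ((k : ℝ) / lam) - (k : ℝ) + lam))
  else
    Real.sqrt (2 * ((k : ℝ) * Real.log ((k : ℝ) / lam) - (k : ℝ) + lam))

open Filter Topology Set

namespace PoisAux

lemma le_of_deriv_off {f f' : ℝ → ℝ} {k a b : ℝ} (hab : a ≤ b)
    (hc : ContinuousOn f (Icc a b))
    (hd : ∀ x ∈ Ioo a b, x ≠ k → HasDerivAt f (f' x) x)
    (hn : ∀ x ∈ Ioo a b, x ≠ k → 0 ≤ f' x) : f a ≤ f b := by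
  have key : ∀ c d, a ≤ c → c ≤ d → d ≤ b → k ∉ Ioo c d → f c ≤ f d := by
    intro c d hac hcd hdb hk
    have hm : MonotoneOn f (Icc c d) := by
      apply monotoneOn_of_deriv_nonneg (convex_Icc c d) (hc.mono (Icc_subset_Icc hac hdb))
      · rw [interior_Icc]
        intro x hx
        have hx' : x ∈ Ioo a b := ⟨lt_of_le_of_lt hac hx.1, lt_of_lt_of_le hx.2 hdb⟩
        exact (hd x hx' (fun h => hk (h ▸ hx))).differentiableAt.differentiableWithinAt
      · rw [interior_Icc]
        intro x hx
        have hx' : x ∈ Ioo a b := ⟨lt_of_le_of_lt hac hx.1, lt_of_lt_of_le hx.2 hdb⟩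
        have hne : x ≠ k := fun h => hk (h ▸ hx)
        rw [(hd x hx' hne).deriv]
        exact hn x hx' hne
    exact hm (left_mem_Icc.2 hcd) (right_mem_Icc.2 hcd) hcd
  by_cases hk : k ∈ Ioo a b
  · exact (key a k le_rfl hk.1.le hk.2.le (fun h => lt_irrefl _ h.2)).trans
      (key k b hk.1.le hk.2.le le_rfl (fun h => lt_irrefl _ h.1))
  · exact key a b le_rfl hab le_rfl hk

lemma nonneg_of_unimodal {f w q : ℝ → ℝ} {c k : ℝ} (hk : 0 < k)
    (hc : ContinuousOn f (Ioi 0))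
    (hd : ∀ x, 0 < x → x ≠ k → HasDerivAt f (w x * (c - q x)) x)
    (hw : ∀ x, 0 < x → 0 ≤ w x)
    (hq : ∀ a b, 0 < a → a < b → a ≠ k → b ≠ k → q a ≤ q b)
    (h0 : Tendsto f (𝓝[>] 0) (𝓝 0)) (hi : Tendsto f atTop (𝓝 0))
    (x : ℝ) (hx : 0 < x) : 0 ≤ f x := by
  have main : ∀ x, 0 < x → x ≠ k → 0 ≤ f x := by
    intro x hx hxk
    rcases le_total (q x) c with h | h
    · apply le_of_tendsto h0
      filter_upwards [Ioo_mem_nhdsGT hx] with y hy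
      refine le_of_deriv_off (k := k) hy.2.le (hc.mono ?_) (fun z hz hzk => hd z (hy.1.trans hz.1) hzk) ?_
      · intro z hz; exact lt_of_lt_of_le hy.1 hz.1
      · intro z hz hzk
        have hz0 := hy.1.trans hz.1
        have := hq z x hz0 hz.2 hzk hxk
        exact mul_nonneg (hw z hz0) (by linarith)
    · apply le_of_tendsto hi
      filter_upwards [eventually_ge_atTop x] with y hy
      have : (fun t => - f t) x ≤ (fun t => - f t) y := by
        refine le_of_deriv_off (f := fun t => - f t) (k := k) hy (ContinuousOn.neg (hc.mono ?_))
          (fun z hz hzk => (hd z (hx.trans hz.1) hzk).neg) ?_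
        · intro z hz; exact lt_of_lt_of_le hx hz.1
        · intro z hz hzk
          have hz0 := hx.trans hz.1
          have := hq x z hx hz.1 hxk hzk
          have := mul_nonneg (hw z hz0) (sub_nonneg.2 (h.trans this))
          linarith
      simpa using this
  by_cases hxk : x = k
  · subst hxk
    have ht : Tendsto f (𝓝[≠] x) (𝓝 (f x)) :=
      ((hc.continuousAt (Ioi_mem_nhds hx)).tendsto).mono_left nhdsWithin_le_nhds
    apply ge_of_tendsto ht
    filter_upwards [self_mem_nhdsWithin, nhdsWithin_le_nhds (Ioi_mem_nhds hx)] with y hy hy0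
    exact main y hy0 hy
  · exact main x hx hxk

noncomputable def d (x : ℝ) : ℝ := x - 1 - Real.log x

lemma d_pos {x : ℝ} (hx : 0 < x) (h1 : x ≠ 1) : 0 < d x := by
  have := Real.log_lt_sub_one_of_pos hx h1
  unfold d; linarith

lemma d_deriv {x : ℝ} (hx : 0 < x) : HasDerivAt d (1 - x⁻¹) x := by
  unfold d
  exact ((hasDerivAt_id x).sub_const 1).sub (Real.hasDerivAt_log hx.ne')

lemma mono_pos {f f' : ℝ → ℝ} (hd : ∀ x, 0 < x → HasDerivAt f (f' x) x)
    (hn : ∀ x, 0 < x → 0 ≤ f' x) : MonotoneOn f (Ioi 0) := by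
  intro a ha b hb hab
  refine le_of_deriv_off (k := 0) hab (fun z hz => (hd z (lt_of_lt_of_le ha hz.1)).continuousAt.continuousWithinAt)
    (fun z hz _ => hd z (lt_trans ha hz.1)) (fun z hz _ => hn z (lt_trans ha hz.1))

lemma e1 : MonotoneOn (fun x : ℝ => x - x⁻¹ - 2 * Real.log x) (Ioi 0) := by
  apply mono_pos (f' := fun x => (1 - x⁻¹)^2)
  · intro x hx
    have := ((hasDerivAt_id x).sub (hasDerivAt_inv hx.ne')).sub
      ((Real.hasDerivAt_log hx.ne').const_mul 2)
    refine this.congr_deriv ?_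
    field_simp; ring
  · intro x hx; positivity

lemma e2 : MonotoneOn (fun x : ℝ => x^2 - 4 * x + 3 + 2 * Real.log x) (Ioi 0) := by
  apply mono_pos (f' := fun x => 2 * (x - 1)^2 / x)
  · intro x hx
    have := ((((hasDerivAt_id x).pow 2).sub ((hasDerivAt_id x).const_mul 4)).add_const 3).add
      ((Real.hasDerivAt_log hx.ne').const_mul 2)
    refine this.congr_deriv ?_
    simp; field_simp; ring
  · intro x hx; positivity

lemma e3 : MonotoneOn (fun x : ℝ => (x-1)^2 - 2 * d x) (Ioi 0) := by
  apply mono_pos (f' := fun x => 2 * (x - 1)^2 / x)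
  · intro x hx
    have := (((hasDerivAt_id x).sub_const 1).pow 2).sub ((d_deriv hx).const_mul 2)
    refine this.congr_deriv ?_
    simp; field_simp
  · intro x hx; positivity

lemma e4 : MonotoneOn (fun x : ℝ => 2 * d x - (1 - x⁻¹)^2) (Ioi 0) := by
  apply mono_pos (f' := fun x => 2 * (x - 1)^2 * (x + 1) / x^3)
  · intro x hx
    have := ((d_deriv hx).const_mul 2).sub (((hasDerivAt_inv hx.ne').const_sub 1).pow 2)
    refine this.congr_deriv ?_
    simp; field_simp; ring
  · intro x hx; positivity

lemma glue {r r' : ℝ → ℝ} (hd : ∀ x, 0 < x → x ≠ 1 → HasDerivAt r (r' x) x)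
    (hn : ∀ x, 0 < x → x ≠ 1 → 0 ≤ r' x) (hl : ∀ x, 0 < x → x < 1 → r x ≤ 1)
    (hr : ∀ x, 1 < x → 1 ≤ r x) (a b : ℝ) (ha : 0 < a) (hab : a < b) (ha1 : a ≠ 1) (hb1 : b ≠ 1) :
    r a ≤ r b := by
  by_cases h : a < 1 ∧ 1 < b
  · exact (hl a ha h.1).trans (hr b h.2)
  · have hne : ∀ z ∈ Icc a b, z ≠ 1 := by
      rintro z hz rfl
      exact h ⟨lt_of_le_of_ne hz.1 ha1, lt_of_le_of_ne hz.2 hb1.symm⟩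
    refine le_of_deriv_off (k := 0) hab.le
      (fun z hz => (hd z (lt_of_lt_of_le ha hz.1) (hne z hz)).continuousAt.continuousWithinAt)
      (fun z hz _ => hd z (lt_trans ha hz.1) (hne z (Ioo_subset_Icc_self hz)))
      (fun z hz _ => hn z (lt_trans ha hz.1) (hne z (Ioo_subset_Icc_self hz)))

lemma ratio1 : ∀ (a b : ℝ), 0 < a → a < b → a ≠ 1 → b ≠ 1 →
    (a-1)^2 / (2 * d a) ≤ (b-1)^2 / (2 * d b) := by
  apply glue (r := fun x => (x-1)^2 / (2 * d x))
    (r' := fun x => 2 * ((x - 1) * (x - x⁻¹ - 2 * Real.log x)) / (2 * d x)^2)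
  · intro x hx h1
    have hp := d_pos hx h1
    have := (((hasDerivAt_id x).sub_const 1).pow 2).div ((d_deriv hx).const_mul 2) (by positivity)
    refine this.congr_deriv ?_
    simp [d]; field_simp; ring
  · intro x hx h1
    have : 0 ≤ (x - 1) * (x - x⁻¹ - 2 * Real.log x) := by
      rcases le_total x 1 with h | h
      · have := e1 hx (by simp : (1:ℝ) ∈ Ioi 0) h
        simp at this
        exact mul_nonneg_of_nonpos_of_nonpos (by linarith) (by linarith)
      · have := e1 (by simp : (1:ℝ) ∈ Ioi 0) hx h
        simp at this
        exact mul_nonneg (by linarith) (by linarith)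
    positivity
  · intro x hx h1
    have := e3 hx (by simp : (1:ℝ) ∈ Ioi 0) h1.le
    have hp := d_pos hx h1.ne
    simp [d] at this
    show (x-1)^2 / (2 * d x) ≤ 1
    rw [div_le_one (by positivity)]; unfold d; linarith
  · intro x h1
    have hx : 0 < x := by linarith
    have := e3 (by simp : (1:ℝ) ∈ Ioi 0) hx h1.le
    have hp := d_pos hx h1.ne'
    simp [d] at this
    show 1 ≤ (x-1)^2 / (2 * d x)
    rw [one_le_div (by positivity)]; unfold d; linarith

lemma ratio2 (a b : ℝ) (ha : 0 < a) (hab : a < b) (ha1 : a ≠ 1) (hb1 : b ≠ 1) :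
    (1 - b⁻¹)^2 / (2 * d b) ≤ (1 - a⁻¹)^2 / (2 * d a) := by
  have := glue (r := fun x => (2 * d x) / (1 - x⁻¹)^2)
    (r' := fun x => 2 * ((x - 1) * (x^2 - 4 * x + 3 + 2 * Real.log x)) / (x^3 * ((1 - x⁻¹)^2)^2))
    ?_ ?_ ?_ ?_ a b ha hab ha1 hb1
  · have hb := ha.trans hab
    have := d_pos ha ha1
    have h2 := d_pos (ha.trans hab) hb1
    have ha' : 1 - a⁻¹ ≠ 0 := by
      intro h; apply ha1; field_simp at h; linarith
    have hb' : 1 - b⁻¹ ≠ 0 := by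
      intro h; apply hb1; field_simp at h; linarith
    rw [← inv_div, ← inv_div (2 * d a)]
    gcongr
  · intro x hx h1
    have hx' : 1 - x⁻¹ ≠ 0 := by
      intro h; apply h1; field_simp at h; linarith
    have := ((d_deriv hx).const_mul 2).div (((hasDerivAt_inv hx.ne').const_sub 1).pow 2) (pow_ne_zero 2 hx')
    refine this.congr_deriv ?_
    have h3 : x - 1 ≠ 0 := sub_ne_zero.2 h1
    have h4 : 1 - x⁻¹ = (x - 1) / x := by field_simp
    simp [d]
    rw [h4]
    field_simp; ring
  · intro x hx h1
    have : 0 ≤ (x - 1) * (x^2 - 4 * x + 3 + 2 * Real.log x) := by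
      rcases le_total x 1 with h | h
      · have := e2 hx (by simp : (1:ℝ) ∈ Ioi 0) h
        norm_num at this
        exact mul_nonneg_of_nonpos_of_nonpos (by linarith) (by linarith)
      · have := e2 (by simp : (1:ℝ) ∈ Ioi 0) hx h
        norm_num at this
        exact mul_nonneg (by linarith) (by linarith)
    positivity
  · intro x hx h1
    have := e4 hx (by simp : (1:ℝ) ∈ Ioi 0) h1.le
    have hx' : 1 - x⁻¹ ≠ 0 := by
      intro h; field_simp at h; linarith
    simp [d] at this
    show (2 * d x) / (1 - x⁻¹)^2 ≤ 1
    rw [div_le_one (by positivity)]; unfold d; linarith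
  · intro x h1
    have hx : 0 < x := by linarith
    have := e4 (by simp : (1:ℝ) ∈ Ioi 0) hx h1.le
    have hx' : 1 - x⁻¹ ≠ 0 := by
      intro h; field_simp at h; linarith
    simp [d] at this
    show 1 ≤ (2 * d x) / (1 - x⁻¹)^2
    rw [one_le_div (by positivity)]; unfold d; linarith


lemma gauss_int : MeasureTheory.Integrable (fun x : ℝ => Real.exp (-x ^ 2 / 2) / Real.sqrt (2 * Real.pi)) := by
  have := (integrable_exp_neg_mul_sq (by norm_num : (0:ℝ) < 1/2)).div_const (Real.sqrt (2 * Real.pi))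
  convert this using 4
  ring

lemma cdf_eq (t : ℝ) : stdGaussianCDF t = ProbabilityTheory.cdf (ProbabilityTheory.gaussianReal 0 1) t := by
  rw [ProbabilityTheory.cdf_eq_real, MeasureTheory.Measure.real,
    ProbabilityTheory.gaussianReal_apply_eq_integral 0 (by simp), ENNReal.toReal_ofReal]
  · unfold stdGaussianCDF
    congr 1
    ext x
    simp [ProbabilityTheory.gaussianPDFReal]
    field_simp
  · exact MeasureTheory.integral_nonneg fun x => ProbabilityTheory.gaussianPDFReal_nonneg _ _ _

lemma cdf_deriv (t : ℝ) : HasDerivAt stdGaussianCDF (Real.exp (-t ^ 2 / 2) / Real.sqrt (2 * Real.pi)) t := by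
  have hc : Continuous (fun x : ℝ => Real.exp (-x ^ 2 / 2) / Real.sqrt (2 * Real.pi)) := by fun_prop
  have h := intervalIntegral.integral_hasDerivAt_right (a := 0) (b := t) (hc.intervalIntegrable _ _)
    (hc.stronglyMeasurableAtFilter _ _) hc.continuousAt
  have h2 := h.const_add (stdGaussianCDF 0)
  refine h2.congr_of_eventuallyEq (Eventually.of_forall fun u => ?_)
  show _ = stdGaussianCDF 0 + _
  rw [← intervalIntegral.integral_Iic_sub_Iic gauss_int.integrableOn gauss_int.integrableOn]
  unfold stdGaussianCDF
  ring

lemma cdf_bot : Tendsto stdGaussianCDF atBot (𝓝 0) := by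
  rw [show stdGaussianCDF = _ from funext cdf_eq]
  exact ProbabilityTheory.tendsto_cdf_atBot _

lemma cdf_top : Tendsto stdGaussianCDF atTop (𝓝 1) := by
  rw [show stdGaussianCDF = _ from funext cdf_eq]
  exact ProbabilityTheory.tendsto_cdf_atTop _


noncomputable def S (n : ℕ) (lam : ℝ) : ℝ :=
  ∑ m ∈ Finset.range n, lam ^ m * Real.exp (-lam) / m.factorial

lemma S_deriv (n : ℕ) (x : ℝ) :
    HasDerivAt (S (n+1)) (-(x ^ n * Real.exp (-x) / n.factorial)) x := by
  have he : HasDerivAt (fun x => Real.exp (-x)) (-Real.exp (-x)) x := by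
    simpa using (hasDerivAt_neg x).exp
  induction n with
  | zero => 
    have : S (0+1) = fun x => Real.exp (-x) := by ext; simp [S]
    rw [this]; simpa using he
  | succ n ih =>
    have : S (n+1+1) = fun x => S (n+1) x + x ^ (n+1) * Real.exp (-x) / (n+1).factorial := by
      ext; simp only [S]; rw [Finset.sum_range_succ]
    rw [this]
    have h := ih.add ((((hasDerivAt_id x).pow (n+1)).mul he).div_const ((n+1).factorial : ℝ))
    refine h.congr_deriv ?_
    have : (n.factorial : ℝ) ≠ 0 := by positivity
    simp [Nat.factorial_succ]; field_simp; ring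

lemma S_cont (n : ℕ) : Continuous (S n) := by
  unfold S; fun_prop

lemma S_zero (n : ℕ) : S (n+1) 0 = 1 := by
  simp [S, Finset.sum_range_succ']

lemma S_inf (n : ℕ) : Tendsto (S n) atTop (𝓝 0) := by
  unfold S
  have : (0:ℝ) = ∑ m ∈ Finset.range n, 0 / (m.factorial : ℝ) := by simp
  rw [this]
  exact tendsto_finsetSum _ fun m _ => (Real.tendsto_pow_mul_exp_neg_atTop_nhds_zero m).div_const _


lemma D_eq {k x : ℝ} (hk : 0 < k) (hx : 0 < x) :
    k * Real.log (k / x) - k + x = k * d (x / k) := by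
  unfold d
  rw [Real.log_div hk.ne' hx.ne', Real.log_div hx.ne' hk.ne']
  field_simp; ring

noncomputable def g (k x : ℝ) : ℝ := |x - k| / Real.sqrt (2 * (k * d (x / k)))

lemma g_eq {k x : ℝ} (hk : 0 < k) :
    g k x = Real.sqrt (k * ((x/k - 1)^2 / (2 * d (x/k)))) := by
  unfold g
  rw [← Real.sqrt_sq_eq_abs, ← Real.sqrt_div (sq_nonneg _)]
  congr 1
  have : x - k = k * (x / k - 1) := by field_simp
  rw [this]
  rcases eq_or_ne (d (x/k)) 0 with h | h
  · simp [h]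
  · field_simp

lemma g_mono {k : ℝ} (hk : 0 < k) (a b : ℝ) (ha : 0 < a) (hab : a < b) (hak : a ≠ k) (hbk : b ≠ k) :
    g k a ≤ g k b := by
  rw [g_eq hk, g_eq hk]
  apply Real.sqrt_le_sqrt
  apply mul_le_mul_of_nonneg_left _ hk.le
  apply ratio1 _ _ (by positivity) (by gcongr)
  · intro h; rw [div_eq_one_iff_eq hk.ne'] at h; exact hak h
  · intro h; rw [div_eq_one_iff_eq hk.ne'] at h; exact hbk h

lemma g_div_eq {k x : ℝ} (hk : 0 < k) (hx : 0 < x) :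
    g k x / x = Real.sqrt (k⁻¹ * ((1 - (x/k)⁻¹)^2 / (2 * d (x/k)))) := by
  rw [g_eq hk]
  have hxx : ∀ y, y / x = y / Real.sqrt (x^2) := fun y => by rw [Real.sqrt_sq hx.le]
  rw [hxx, ← Real.sqrt_div' _ (sq_nonneg _)]
  congr 1
  rcases eq_or_ne (d (x/k)) 0 with h | h
  · simp [h]
  · field_simp

lemma g_div_anti {k : ℝ} (hk : 0 < k) (a b : ℝ) (ha : 0 < a) (hab : a < b) (hak : a ≠ k) (hbk : b ≠ k) :
    g k b / b ≤ g k a / a := by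
  rw [g_div_eq hk ha, g_div_eq hk (ha.trans hab)]
  apply Real.sqrt_le_sqrt
  apply mul_le_mul_of_nonneg_left _ (by positivity)
  apply ratio2 _ _ (by positivity) (by gcongr)
  · intro h; rw [div_eq_one_iff_eq hk.ne'] at h; exact hak h
  · intro h; rw [div_eq_one_iff_eq hk.ne'] at h; exact hbk h

noncomputable def Q (k x : ℝ) : ℝ := Real.sqrt (2 * (k * d (x / k)))

lemma sll_lt {k : ℕ} (hk : 0 < k) {x : ℝ} (hx : 0 < x) (h : (k:ℝ) < x) : poissonSLL x k = - Q k x := by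
  have hk' : (0:ℝ) < k := by exact_mod_cast hk
  rw [poissonSLL, if_pos h, D_eq hk' hx, Q]

lemma sll_ge {k : ℕ} (hk : 0 < k) {x : ℝ} (hx : 0 < x) (h : x ≤ (k:ℝ)) : poissonSLL x k = Q k x := by
  have hk' : (0:ℝ) < k := by exact_mod_cast hk
  rw [poissonSLL, if_neg h.not_gt, D_eq hk' hx, Q]

lemma Q_deriv {k x : ℝ} (hk : 0 < k) (hx : 0 < x) (h : x ≠ k) :
    HasDerivAt (Q k) ((x - k) / (x * Q k x)) x := by
  have h1 : x / k ≠ 1 := by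
    intro h'; rw [div_eq_one_iff_eq hk.ne'] at h'; exact h h'
  have hp := d_pos (div_pos hx hk) h1
  have h2 := (((d_deriv (div_pos hx hk)).comp x ((hasDerivAt_id x).div_const k)).const_mul k).const_mul 2
  have h3 := h2.sqrt (by simpa [hk.ne'] using hp.ne')
  refine h3.congr_deriv ?_
  simp [Q]
  have : Real.sqrt (2 * (k * d (x / k))) ≠ 0 := by positivity
  simp at this
  field_simp

lemma sll_deriv {k : ℕ} (hk : 0 < k) {x : ℝ} (hx : 0 < x) (h : x ≠ k) :
    HasDerivAt (fun y => poissonSLL y k) (-(g k x / x)) x := by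
  have hk' : (0:ℝ) < k := by exact_mod_cast hk
  rcases lt_or_gt_of_ne h with h' | h'
  · have := Q_deriv hk' hx h
    refine (this.congr_of_eventuallyEq ?_).congr_deriv ?_
    · filter_upwards [Ioo_mem_nhds hx h'] with y hy
      exact sll_ge hk hy.1 hy.2.le
    · rw [g, abs_of_neg (by linarith), ← Q, div_div, mul_comm x]; ring
  · have := (Q_deriv hk' hx h).neg
    refine (this.congr_of_eventuallyEq ?_).congr_deriv ?_
    · filter_upwards [Ioi_mem_nhds h'] with y hy
      exact sll_lt hk (hk'.trans hy) hy
    · rw [g, abs_of_pos (by linarith), ← Q, div_div, mul_comm x]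

lemma Q_cont {k x : ℝ} (hk : 0 < k) (hx : 0 < x) : ContinuousAt (Q k) x := by
  have h2 := (((d_deriv (div_pos hx hk)).comp x ((hasDerivAt_id x).div_const k)).const_mul k).const_mul 2
  exact h2.continuousAt.sqrt

lemma sll_abs {k : ℕ} (hk : 0 < k) {x : ℝ} (hx : 0 < x) : |poissonSLL x k| = Q k x := by
  rcases le_or_gt x k with h | h
  · rw [sll_ge hk hx h, abs_of_nonneg (by unfold Q; positivity)]
  · rw [sll_lt hk hx h, abs_neg, abs_of_nonneg (by unfold Q; positivity)]

lemma sll_cont {k : ℕ} (hk : 0 < k) {x : ℝ} (hx : 0 < x) : ContinuousAt (fun y => poissonSLL y k) x := by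
  have hk' : (0:ℝ) < k := by exact_mod_cast hk
  by_cases h : x = k
  · have hQ : Q k x = 0 := by rw [h]; simp [Q, d, hk'.ne']
    have h0 : poissonSLL x k = 0 := by rw [sll_ge hk hx h.le, hQ]
    show Tendsto _ _ (𝓝 (poissonSLL x k))
    rw [h0]
    apply squeeze_zero_norm' (a := Q k)
    · filter_upwards [Ioi_mem_nhds hx] with y hy
      rw [Real.norm_eq_abs, sll_abs hk hy]
    · rw [← hQ]; exact Q_cont hk' hx
  · exact (sll_deriv hk hx h).continuousAt

lemma sll_zero {k : ℕ} (hk : 0 < k) : Tendsto (fun y => poissonSLL y k) (𝓝[>] 0) atTop := by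
  have hk' : (0:ℝ) < k := by exact_mod_cast hk
  have : Tendsto (Q k) (𝓝[>] 0) atTop := by
    unfold Q
    apply Real.tendsto_sqrt_atTop.comp
    apply Tendsto.const_mul_atTop (by norm_num)
    apply Tendsto.const_mul_atTop hk'
    have hl : Tendsto (fun x : ℝ => x / k) (𝓝[>] 0) (𝓝[>] 0) := by
      apply tendsto_nhdsWithin_iff.2 ⟨?_, ?_⟩
      · have : ContinuousAt (fun x : ℝ => x / k) 0 := by fun_prop
        simpa [ContinuousAt] using this.tendsto.mono_left (nhdsWithin_le_nhds (s := Ioi 0))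
      · filter_upwards [self_mem_nhdsWithin] with y hy
        exact div_pos hy hk'
    have hd : Tendsto d (𝓝[>] 0) atTop := by
      have h1 : Tendsto (fun x : ℝ => x - 1) (𝓝[>] 0) (𝓝 (0 - 1)) := by
        have : ContinuousAt (fun x : ℝ => x - 1) 0 := by fun_prop
        exact this.tendsto.mono_left nhdsWithin_le_nhds
      have h2 := tendsto_neg_atBot_atTop.comp Real.tendsto_log_nhdsGT_zero
      exact (h1.add_atTop h2).congr fun x => by simp [d]; ring
    exact hd.comp hl
  refine this.congr' ?_
  filter_upwards [Ioo_mem_nhdsGT hk'] with y hy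
  rw [sll_ge hk hy.1 hy.2.le]

lemma sll_inf {k : ℕ} (hk : 0 < k) : Tendsto (fun y => poissonSLL y k) atTop atBot := by
  have hk' : (0:ℝ) < k := by exact_mod_cast hk
  have : Tendsto (Q k) atTop atTop := by
    unfold Q
    apply Real.tendsto_sqrt_atTop.comp
    apply Tendsto.const_mul_atTop (by norm_num)
    apply Tendsto.const_mul_atTop hk'
    have hd : Tendsto d atTop atTop := by
      have : Tendsto (fun x : ℝ => x / 2 - 2) atTop atTop :=
        tendsto_atTop_add_const_right _ _ (tendsto_id.atTop_div_const (by norm_num))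
      apply tendsto_atTop_mono' _ _ this
      filter_upwards [eventually_gt_atTop 0] with x hx
      have h := Real.log_le_sub_one_of_pos (half_pos hx)
      have h2 := Real.log_le_sub_one_of_pos (by norm_num : (0:ℝ) < 2)
      rw [Real.log_div hx.ne' (by norm_num)] at h
      unfold d
      linarith
    exact hd.comp (tendsto_id.atTop_div_const hk')
  refine (tendsto_neg_atTop_atBot.comp this).congr' ?_
  filter_upwards [eventually_gt_atTop (k:ℝ)] with y hy
  simp [sll_lt hk (hk'.trans hy) hy]

noncomputable def A (k : ℕ) (x : ℝ) : ℝ := stdGaussianCDF (poissonSLL x k)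

noncomputable def C (k : ℕ) : ℝ := Real.exp k / (k:ℝ)^k / Real.sqrt (2 * Real.pi)

lemma C_nonneg (k : ℕ) : 0 ≤ C k := by unfold C; positivity

lemma A_cont {k : ℕ} (hk : 0 < k) : ContinuousOn (A k) (Ioi 0) := by
  intro x hx
  exact (ContinuousAt.comp (cdf_deriv _).continuousAt (sll_cont hk hx)).continuousWithinAt

lemma A_deriv (n : ℕ) {x : ℝ} (hx : 0 < x) (h : x ≠ (n+1 : ℕ)) :
    HasDerivAt (A (n+1)) (-(C (n+1) * x ^ n * Real.exp (-x) * g (n+1 : ℕ) x)) x := by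
  have hk : 0 < n + 1 := n.succ_pos
  have hk' : (0:ℝ) < (n+1 : ℕ) := by exact_mod_cast hk
  have h1 := (cdf_deriv (poissonSLL x (n+1))).comp x (sll_deriv hk hx h)
  refine h1.congr_deriv ?_
  have hx1 : x / (n+1 : ℕ) ≠ 1 := by
    intro h'; rw [div_eq_one_iff_eq hk'.ne'] at h'; exact h h'
  have hp := d_pos (div_pos hx hk') hx1
  have hs : -poissonSLL x (n+1) ^ 2 / 2 = -((n+1 : ℕ) * d (x / (n+1 : ℕ))) := by
    rw [← sq_abs, sll_abs hk hx, Q, Real.sq_sqrt (by positivity)]; ring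
  have hE : Real.exp (-poissonSLL x (n+1) ^ 2 / 2)
      = Real.exp (n+1 : ℕ) / ((n+1 : ℕ):ℝ)^(n+1) * x^(n+1) * Real.exp (-x) := by
    have h3 : -(((n+1 : ℕ):ℝ) * d (x / (n+1 : ℕ)))
        = (n+1 : ℕ) + (n+1 : ℕ) * Real.log (x / (n+1 : ℕ)) + -x := by
      unfold d; field_simp; ring
    rw [hs, h3, Real.exp_add, Real.exp_add, Real.exp_nat_mul, Real.exp_log (by positivity), div_pow]
    ring
  rw [hE, C]
  field_simp; ring

lemma A_zero {k : ℕ} (hk : 0 < k) : Tendsto (A k) (𝓝[>] 0) (𝓝 1) := cdf_top.comp (sll_zero hk)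
lemma A_inf {k : ℕ} (hk : 0 < k) : Tendsto (A k) atTop (𝓝 0) := cdf_bot.comp (sll_inf hk)

lemma S_lim0 (n : ℕ) : Tendsto (S (n+1)) (𝓝[>] 0) (𝓝 1) := by
  have := ((S_cont (n+1)).tendsto 0).mono_left (nhdsWithin_le_nhds (s := Ioi 0))
  rwa [S_zero] at this

lemma lower (n : ℕ) (x : ℝ) (hx : 0 < x) : S (n+1) x ≤ A (n+1) x := by
  have hk : 0 < n + 1 := n.succ_pos
  have hk' : (0:ℝ) < (n+1 : ℕ) := by exact_mod_cast hk
  have := nonneg_of_unimodal (f := fun x => A (n+1) x - S (n+1) x) (k := (n+1 : ℕ))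
    (w := fun x => x ^ n * Real.exp (-x)) (c := 1 / n.factorial) (q := fun x => C (n+1) * g (n+1 : ℕ) x)
    hk' ((A_cont hk).sub (S_cont _).continuousOn) ?_ ?_ ?_ ?_ ?_ x hx
  · simpa using this
  · intro y hy hne
    exact ((A_deriv n hy hne).sub (S_deriv n y)).congr_deriv (by ring)
  · intro y hy; positivity
  · intro a b ha hab hak hbk
    exact mul_le_mul_of_nonneg_left (g_mono hk' a b ha hab hak hbk) (C_nonneg _)
  · simpa using (A_zero hk).sub (S_lim0 n)
  · simpa using (A_inf hk).sub (S_inf (n+1))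

lemma upper (n : ℕ) (x : ℝ) (hx : 0 < x) : A (n+1) x ≤ S (n+2) x := by
  have hk : 0 < n + 1 := n.succ_pos
  have hk' : (0:ℝ) < (n+1 : ℕ) := by exact_mod_cast hk
  have := nonneg_of_unimodal (f := fun x => S (n+2) x - A (n+1) x) (k := (n+1 : ℕ))
    (w := fun x => x ^ (n+1) * Real.exp (-x)) (c := -(1 / (n+1).factorial))
    (q := fun x => -(C (n+1) * (g (n+1 : ℕ) x / x)))
    hk' ((S_cont _).continuousOn.sub (A_cont hk)) ?_ ?_ ?_ ?_ ?_ x hx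
  · simpa using this
  · intro y hy hne
    refine ((S_deriv (n+1) y).sub (A_deriv n hy hne)).congr_deriv ?_
    field_simp; ring
  · intro y hy; positivity
  · intro a b ha hab hak hbk
    exact neg_le_neg (mul_le_mul_of_nonneg_left (g_div_anti hk' a b ha hab hak hbk) (C_nonneg _))
  · simpa using (S_lim0 (n+1)).sub (A_zero hk)
  · simpa using (S_inf (n+2)).sub (A_inf hk)

lemma cdf_chernoff (lam : ℝ) (hlam : 0 < lam) : stdGaussianCDF (-Real.sqrt (2 * lam)) ≤ Real.exp (-lam) := by
  have h := ProbabilityTheory.measure_le_le_exp_mul_mgf (μ := ProbabilityTheory.gaussianReal 0 1)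
    (X := id) (t := -Real.sqrt (2 * lam)) (-Real.sqrt (2 * lam)) (by simp)
    (ProbabilityTheory.integrable_exp_mul_gaussianReal _)
  rw [ProbabilityTheory.mgf_id_gaussianReal, ← Real.exp_add] at h
  rw [cdf_eq, ProbabilityTheory.cdf_eq_real]
  refine h.trans (le_of_eq ?_)
  congr 1
  have := Real.sq_sqrt (by positivity : 0 ≤ 2 * lam)
  simp only [NNReal.coe_one]
  linear_combination (-1/2) * this

end PoisAux

theorem poisson_intersection (lam : ℝ) (hlam : 0 < lam) (k : ℕ) :
    (∑ m ∈ Finset.range k, lam ^ m * Real.exp (-lam) / m.factorial) ≤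
        stdGaussianCDF (poissonSLL lam k) ∧
      stdGaussianCDF (poissonSLL lam k) ≤
        ∑ m ∈ Finset.range (k + 1), lam ^ m * Real.exp (-lam) / m.factorial := by
  cases k with
  | zero =>
    constructor
    · rw [PoisAux.cdf_eq]
      simpa using ProbabilityTheory.cdf_nonneg _ _
    · have := PoisAux.cdf_chernoff lam hlam
      simpa [poissonSLL, hlam] using this
  | succ n => exact ⟨PoisAux.lower n lam hlam, PoisAux.upper n lam hlam⟩
end

section
/- Let K ~ bin(n,p) and define G(k) = sign(k/n - p)·sqrt(2n(q·ln(q/p) + (1-q)·ln((1-q)/(1-p)))) with q = k/n. Then P(K < k) ≤ Φ(G(k)) ≤ P(K ≤ k) for every integer 0 ≤ k ≤ n. -/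
noncomputable def binomialSLL (n : ℕ) (p : ℝ) (k : ℕ) : ℝ :=
  if ((k : ℝ) / n) < p then
    -Real.sqrt (2 * (n * ((k : ℝ) / n * Real.log (((k : ℝ) / n) / p) +
      (1 - (k : ℝ) / n) * Real.log ((1 - (k : ℝ) / n) / (1 - p)))))
  else
    Real.sqrt (2 * (n * ((k : ℝ) / n * Real.log (((k : ℝ) / n) / p) +
      (1 - (k : ℝ) / n) * Real.log ((1 - (k : ℝ) / n) / (1 - p)))))

open Set Filter Topology

noncomputable def bD (q x : ℝ) : ℝ := q * Real.log (q / x) + (1 - q) * Real.log ((1 - q) / (1 - x))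

lemma bD_symm (q x : ℝ) : bD (1 - q) (1 - x) = bD q x := by
  unfold bD; simp only [sub_sub_cancel]; ring

lemma bD_self {q : ℝ} (h0 : 0 < q) (h1 : q < 1) : bD q q = 0 := by
  unfold bD
  rw [div_self h0.ne', div_self (by linarith : (1 - q) ≠ 0)]; simp

lemma bD_hasDeriv {q x : ℝ} (h0 : 0 < q) (h1 : q < 1) (hx0 : 0 < x) (hx1 : x < 1) :
    HasDerivAt (bD q) ((x - q) / (x * (1 - x))) x := by
  have hx1' : (1 - x) ≠ 0 := by linarith
  have hq1' : (1 - q) ≠ 0 := by linarith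
  have e1 : HasDerivAt (fun y : ℝ => q / y) (-q / x ^ 2) x := by
    have := (hasDerivAt_inv hx0.ne').const_mul q
    refine this.congr_deriv ?_
    field_simp
  have e2 : HasDerivAt (fun y : ℝ => (1 - q) / (1 - y)) ((1 - q) / (1 - x) ^ 2) x := by
    have h := ((hasDerivAt_id x).const_sub 1).inv hx1'
    have := h.const_mul (1 - q)
    refine this.congr_deriv ?_
    simp; field_simp
  have f1 := (e1.log (by positivity)).const_mul q
  have f2 := (e2.log (div_ne_zero hq1' hx1')).const_mul (1 - q)
  refine (f1.add f2).congr_deriv ?_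
  field_simp
  ring

lemma bE_mono {q : ℝ} (h0 : 0 < q) (h1 : q < 1) :
    MonotoneOn (fun x => bD q x - (x - q) ^ 2 / (2 * x * (1 - q))) (Ioo 0 1) := by
  have hd : ∀ x ∈ Ioo (0:ℝ) 1, HasDerivAt (fun x => bD q x - (x - q) ^ 2 / (2 * x * (1 - q)))
      ((x - q) ^ 2 * (1 + x) / (2 * x ^ 2 * (1 - x) * (1 - q))) x := by
    rintro x ⟨hx0, hx1⟩
    have hx1' : (1 - x) ≠ 0 := by linarith
    have hq1' : (1 - q) ≠ 0 := by linarith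
    have e := (((hasDerivAt_id x).sub_const q).pow 2).div
      (((hasDerivAt_id x).const_mul 2).mul_const (1 - q)) (by simp; exact ⟨hx0.ne', hq1'⟩)
    refine ((bD_hasDeriv h0 h1 hx0 hx1).sub e).congr_deriv ?_
    simp
    field_simp
    ring
  apply monotoneOn_of_deriv_nonneg (convex_Ioo 0 1)
  · exact fun x hx => (hd x hx).continuousAt.continuousWithinAt
  · rw [interior_Ioo]; exact fun x hx => (hd x hx).differentiableAt.differentiableWithinAt
  · rw [interior_Ioo]; intro x hx
    rw [(hd x hx).deriv]
    have := hx.1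
    have h1x : 0 < 1 - x := by linarith [hx.2]
    have h1q : 0 < 1 - q := by linarith
    positivity

lemma bD_ge {q x : ℝ} (h0 : 0 < q) (hqx : q ≤ x) (hx1 : x < 1) :
    (x - q) ^ 2 / (2 * x * (1 - q)) ≤ bD q x := by
  have := bE_mono h0 (by linarith) ⟨h0, by linarith⟩ ⟨by linarith, hx1⟩ hqx
  simp [bD_self h0 (by linarith : q < 1)] at this
  exact this

lemma bD_le {q x : ℝ} (h1 : q < 1) (hqx : x ≤ q) (hx0 : 0 < x) :
    bD q x ≤ (x - q) ^ 2 / (2 * x * (1 - q)) := by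
  have := bE_mono (q := q) (by linarith) h1 ⟨hx0, by linarith⟩ ⟨by linarith, h1⟩ hqx
  simp [bD_self (by linarith : 0 < q) h1] at this
  exact this

lemma bD_ge' {q x : ℝ} (h1 : q < 1) (hqx : x ≤ q) (hx0 : 0 < x) :
    (x - q) ^ 2 / (2 * (1 - x) * q) ≤ bD q x := by
  have := bD_ge (q := 1 - q) (x := 1 - x) (by linarith) (by linarith) (by linarith)
  rw [bD_symm] at this
  convert this using 2 <;> ring

lemma bD_le' {q x : ℝ} (h0 : 0 < q) (hqx : q ≤ x) (hx1 : x < 1) :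
    bD q x ≤ (x - q) ^ 2 / (2 * (1 - x) * q) := by
  have := bD_le (q := 1 - q) (x := 1 - x) (by linarith) (by linarith) (by linarith)
  rw [bD_symm] at this
  convert this using 2 <;> ring

lemma bD_pos {q x : ℝ} (h0 : 0 < q) (h1 : q < 1) (hx0 : 0 < x) (hx1 : x < 1) (h : x ≠ q) :
    0 < bD q x := by
  have : 0 < (x - q) ^ 2 := by have := sub_ne_zero.2 h; positivity
  have a1 : 0 < 1 - x := by linarith
  have a2 : 0 < 1 - q := by linarith
  rcases le_total x q with hh | hh
  · exact lt_of_lt_of_le (by positivity) (bD_ge' h1 hh hx0)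
  · exact lt_of_lt_of_le (by positivity) (bD_ge h0 hh hx1)

lemma bD_nonneg {q x : ℝ} (h0 : 0 < q) (h1 : q < 1) (hx0 : 0 < x) (hx1 : x < 1) :
    0 ≤ bD q x := by
  by_cases h : x = q
  · rw [h, bD_self h0 h1]
  · exact (bD_pos h0 h1 hx0 hx1 h).le

noncomputable def bR (q x : ℝ) : ℝ := (1 - x) ^ 2 * bD q x / (q - x) ^ 2

lemma bR_hasDeriv {q x : ℝ} (h0 : 0 < q) (h1 : q < 1) (hx0 : 0 < x) (hx1 : x < 1) (h : x ≠ q) :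
    HasDerivAt (bR q) (2 * (1 - q) * (1 - x) / (q - x) ^ 2 *
      ((bD q x - (x - q) ^ 2 / (2 * x * (1 - q))) / (q - x))) x := by
  have hx1' : (1 - x) ≠ 0 := by linarith
  have hq1' : (1 - q) ≠ 0 := by linarith
  have hqx : q - x ≠ 0 := fun hh => h (by linarith)
  have e := ((((hasDerivAt_id x).const_sub 1).pow 2).mul (bD_hasDeriv h0 h1 hx0 hx1)).div
    (((hasDerivAt_id x).const_sub q).pow 2) (by simpa using hqx)
  refine e.congr_deriv ?_
  simp
  field_simp
  ring

lemma bR_anti {q : ℝ} (h0 : 0 < q) (h1 : q < 1) {x y : ℝ} (hx0 : 0 < x) (hy1 : y < 1)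
    (hxq : x ≠ q) (hyq : y ≠ q) (hxy : x ≤ y) : bR q y ≤ bR q x := by
  have a2 : 0 < 1 - q := by linarith
  rcases lt_or_gt_of_ne hyq with hy | hy
  · have : AntitoneOn (bR q) (Ioo 0 q) := by
      have hd := fun z (hz : z ∈ Ioo (0:ℝ) q) => bR_hasDeriv h0 h1 hz.1 (hz.2.trans h1) hz.2.ne
      apply antitoneOn_of_deriv_nonpos (convex_Ioo 0 q)
      · exact fun x hx => (hd x hx).continuousAt.continuousWithinAt
      · rw [interior_Ioo]; exact fun x hx => (hd x hx).differentiableAt.differentiableWithinAt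
      · rw [interior_Ioo]; intro z hz
        rw [(hd z hz).deriv]
        have h1x : 0 < 1 - z := by linarith [hz.2]
        apply mul_nonpos_of_nonneg_of_nonpos (by positivity)
        apply div_nonpos_of_nonpos_of_nonneg _ (by linarith [hz.2])
        linarith [bD_le h1 hz.2.le hz.1]
    exact this ⟨hx0, by linarith⟩ ⟨by linarith, hy⟩ hxy
  rcases lt_or_gt_of_ne hxq with hx | hx
  · have b1 : (1 - q) / (2 * q) ≤ bR q x := by
      unfold bR
      rw [le_div_iff₀ (by have := sub_pos.2 hx; positivity)]
      have h1x : 0 < 1 - x := by linarith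
      calc (1 - q) / (2 * q) * (q - x) ^ 2 ≤ (1 - x) / (2 * q) * (q - x) ^ 2 := by gcongr
        _ = (1 - x) ^ 2 * ((x - q) ^ 2 / (2 * (1 - x) * q)) := by field_simp; ring
        _ ≤ _ := by gcongr; exact bD_ge' h1 hx.le hx0
    have b2 : bR q y ≤ (1 - q) / (2 * q) := by
      unfold bR
      have h1x : 0 < 1 - y := by linarith
      rw [div_le_iff₀ (by have := sub_neg.2 hy; positivity)]
      calc (1 - y) ^ 2 * bD q y ≤ (1 - y) ^ 2 * ((y - q) ^ 2 / (2 * (1 - y) * q)) := by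
            gcongr; exact bD_le' h0 hy.le hy1
        _ = (1 - y) / (2 * q) * (q - y) ^ 2 := by field_simp; ring
        _ ≤ _ := by gcongr
    exact b2.trans b1
  · have : AntitoneOn (bR q) (Ioo q 1) := by
      have hd := fun z (hz : z ∈ Ioo q 1) => bR_hasDeriv h0 h1 (h0.trans hz.1) hz.2 hz.1.ne'
      apply antitoneOn_of_deriv_nonpos (convex_Ioo q 1)
      · exact fun x hx => (hd x hx).continuousAt.continuousWithinAt
      · rw [interior_Ioo]; exact fun x hx => (hd x hx).differentiableAt.differentiableWithinAt
      · rw [interior_Ioo]; intro z hz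
        rw [(hd z hz).deriv]
        have h1x : 0 < 1 - z := by linarith [hz.2]
        apply mul_nonpos_of_nonneg_of_nonpos (by positivity)
        apply div_nonpos_of_nonneg_of_nonpos _ (by linarith [hz.1])
        linarith [bD_ge h0 hz.1.le hz.2]
    exact this ⟨hx, by linarith⟩ ⟨hy, hy1⟩ hxy

lemma bR_pos {q x : ℝ} (h0 : 0 < q) (h1 : q < 1) (hx0 : 0 < x) (hx1 : x < 1) (h : x ≠ q) :
    0 < bR q x := by
  have h3 := bD_pos h0 h1 hx0 hx1 h
  have : q - x ≠ 0 := fun hh => h (by linarith)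
  have : 0 < 1 - x := by linarith
  unfold bR
  positivity

lemma unimodal {F w g : ℝ → ℝ} {q : ℝ} (h0 : 0 < q) (h1 : q < 1)
    (hc1 : ContinuousOn F (Ioc 0 q)) (hc2 : ContinuousOn F (Ico q 1))
    (hd : ∀ x, 0 < x → x < 1 → x ≠ q → HasDerivAt F (w x * g x) x)
    (hw : ∀ x, 0 < x → x < 1 → 0 ≤ w x)
    (hg : ∀ x y, 0 < x → y < 1 → x ≠ q → y ≠ q → x ≤ y → g y ≤ g x)
    (hl0 : Tendsto F (𝓝[>] 0) (𝓝 0)) (hl1 : Tendsto F (𝓝[<] 1) (𝓝 0)) :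
    ∀ x, 0 < x → x < 1 → 0 ≤ F x := by
  have key : ∀ x, 0 < x → x < 1 → x ≠ q → 0 ≤ F x := by
    intro x hx0 hx1 hxq
    rcases le_total 0 (g x) with hgx | hgx
    · have mono : ∀ a b, 0 < a → b ≤ x → a ≤ b → (b ≤ q ∨ q ≤ a) → F a ≤ F b := by
        intro a b ha hb hab hq
        have hcont : ContinuousOn F (Icc a b) := by
          rcases hq with hq | hq
          · exact hc1.mono fun z hz => ⟨by linarith [hz.1], by linarith [hz.2]⟩
          · exact hc2.mono fun z hz => ⟨by linarith [hz.1], by linarith [hz.2]⟩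
        have hd' : ∀ z ∈ Ioo a b, HasDerivAt F (w z * g z) z ∧ z ≠ q := by
          intro z hz
          have : z ≠ q := by
            rintro rfl
            rcases hq with hq | hq
            · linarith [hz.2]
            · linarith [hz.1]
          exact ⟨hd z (by linarith [hz.1]) (by linarith [hz.2]) this, this⟩
        have := monotoneOn_of_deriv_nonneg (convex_Icc a b) hcont
          (by rw [interior_Icc]; exact fun z hz => (hd' z hz).1.differentiableAt.differentiableWithinAt)
          (by
            rw [interior_Icc]; intro z hz
            rw [(hd' z hz).1.deriv]
            have hz0 : 0 < z := by linarith [hz.1]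
            exact mul_nonneg (hw z hz0 (by linarith [hz.2]))
              (hgx.trans (hg z x hz0 hx1 (hd' z hz).2 hxq (by linarith [hz.2]))))
        exact this ⟨le_rfl, hab⟩ ⟨hab, le_rfl⟩ hab
      refine le_of_tendsto hl0 ?_
      filter_upwards [Ioo_mem_nhdsGT hx0] with y hy
      rcases le_total x q with hh | hh
      · exact mono y x hy.1 le_rfl hy.2.le (Or.inl hh)
      rcases le_total q y with hh' | hh'
      · exact mono y x hy.1 le_rfl hy.2.le (Or.inr hh')
      · exact (mono y q hy.1 hh hh' (Or.inl le_rfl)).trans (mono q x h0 le_rfl hh (Or.inr le_rfl))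
    · have mono : ∀ a b, x ≤ a → b < 1 → a ≤ b → (b ≤ q ∨ q ≤ a) → F b ≤ F a := by
        intro a b ha hb hab hq
        have hcont : ContinuousOn F (Icc a b) := by
          rcases hq with hq | hq
          · exact hc1.mono fun z hz => ⟨by linarith [hz.1], by linarith [hz.2]⟩
          · exact hc2.mono fun z hz => ⟨by linarith [hz.1], by linarith [hz.2]⟩
        have hd' : ∀ z ∈ Ioo a b, HasDerivAt F (w z * g z) z ∧ z ≠ q := by
          intro z hz
          have : z ≠ q := by
            rintro rfl
            rcases hq with hq | hq
            · linarith [hz.2]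
            · linarith [hz.1]
          exact ⟨hd z (by linarith [hz.1]) (by linarith [hz.2]) this, this⟩
        have := antitoneOn_of_deriv_nonpos (convex_Icc a b) hcont
          (by rw [interior_Icc]; exact fun z hz => (hd' z hz).1.differentiableAt.differentiableWithinAt)
          (by
            rw [interior_Icc]; intro z hz
            rw [(hd' z hz).1.deriv]
            have hz0 : 0 < z := by linarith [hz.1]
            have hz1 : z < 1 := by linarith [hz.2]
            exact mul_nonpos_of_nonneg_of_nonpos (hw z hz0 hz1)
              ((hg x z hx0 hz1 hxq (hd' z hz).2 (by linarith [hz.1])).trans hgx))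
        exact this ⟨le_rfl, hab⟩ ⟨hab, le_rfl⟩ hab
      refine le_of_tendsto hl1 ?_
      filter_upwards [Ioo_mem_nhdsLT hx1] with y hy
      rcases le_total q x with hh | hh
      · exact mono x y le_rfl hy.2 hy.1.le (Or.inr hh)
      rcases le_total y q with hh' | hh'
      · exact mono x y le_rfl hy.2 hy.1.le (Or.inl hh')
      · exact (mono q y hh hy.2 hh' (Or.inr le_rfl)).trans (mono x q le_rfl h1 hh (Or.inl le_rfl))
  intro x hx0 hx1
  by_cases hxq : x = q
  · subst hxq
    have : Tendsto F (𝓝[<] x) (𝓝 (F x)) := by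
      have h := hc1 x ⟨h0, le_rfl⟩
      have h2 : ContinuousWithinAt F (Ioo 0 x) x := h.mono Ioo_subset_Ioc_self
      rwa [ContinuousWithinAt, nhdsWithin_Ioo_eq_nhdsLT h0] at h2
    refine ge_of_tendsto this ?_
    filter_upwards [Ioo_mem_nhdsLT h0] with y hy
    exact key y hy.1 (hy.2.trans h1) hy.2.ne
  · exact key x hx0 hx1 hxq

lemma Phi_eq_real (t : ℝ) :
    stdGaussianCDF t = (ProbabilityTheory.gaussianReal 0 1).real (Iic t) := by
  rw [MeasureTheory.measureReal_def,
    ProbabilityTheory.gaussianReal_apply_eq_integral 0 one_ne_zero, ENNReal.toReal_ofReal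
    (MeasureTheory.integral_nonneg (ProbabilityTheory.gaussianPDFReal_nonneg 0 1))]
  unfold stdGaussianCDF
  congr 1
  ext x
  simp [ProbabilityTheory.gaussianPDFReal_def]
  ring

lemma Phi_eq_cdf (t : ℝ) :
    stdGaussianCDF t = ProbabilityTheory.cdf (ProbabilityTheory.gaussianReal 0 1) t := by
  rw [Phi_eq_real, ProbabilityTheory.cdf_eq_real]

lemma Phi_atTop : Tendsto stdGaussianCDF atTop (𝓝 1) := by
  rw [funext Phi_eq_cdf]; exact ProbabilityTheory.tendsto_cdf_atTop _

lemma Phi_atBot : Tendsto stdGaussianCDF atBot (𝓝 0) := by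
  rw [funext Phi_eq_cdf]; exact ProbabilityTheory.tendsto_cdf_atBot _

lemma Phi_nonneg (t : ℝ) : 0 ≤ stdGaussianCDF t := by
  rw [Phi_eq_real]; exact MeasureTheory.measureReal_nonneg

lemma Phi_hasDeriv (t : ℝ) :
    HasDerivAt stdGaussianCDF (Real.exp (-t ^ 2 / 2) / Real.sqrt (2 * Real.pi)) t := by
  have hint : MeasureTheory.Integrable
      (fun x : ℝ => Real.exp (-x ^ 2 / 2) / Real.sqrt (2 * Real.pi)) := by
    have := ProbabilityTheory.integrable_gaussianPDFReal 0 1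
    rw [ProbabilityTheory.gaussianPDFReal_def] at this
    convert this using 2 with x
    simp
    ring
  have hc : Continuous (fun x : ℝ => Real.exp (-x ^ 2 / 2) / Real.sqrt (2 * Real.pi)) := by
    fun_prop
  have h := intervalIntegral.integral_hasDerivAt_right (a := 0) (b := t)
    hint.intervalIntegrable (hc.stronglyMeasurableAtFilter _ _) hc.continuousAt
  have h2 := h.add_const (stdGaussianCDF 0)
  refine h2.congr_of_eventuallyEq (Eventually.of_forall fun s => ?_)
  have := intervalIntegral.integral_Iic_sub_Iic (a := 0) (b := s) hint.integrableOn hint.integrableOn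
  unfold stdGaussianCDF
  simp only [← this]
  ring

lemma Phi_neg (t : ℝ) : stdGaussianCDF (-t) = 1 - stdGaussianCDF t := by
  have hd : ∀ s, HasDerivAt (fun s => stdGaussianCDF s + stdGaussianCDF (-s)) 0 s := by
    intro s
    have h2 := (Phi_hasDeriv (-s)).comp s (hasDerivAt_neg s)
    refine ((Phi_hasDeriv s).add h2).congr_deriv ?_
    simp
  have hconst := is_const_of_deriv_eq_zero (fun s => (hd s).differentiableAt)
    (fun s => (hd s).deriv)
  have hl : Tendsto (fun s => stdGaussianCDF s + stdGaussianCDF (-s)) atTop (𝓝 (1 + 0)) :=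
    Phi_atTop.add (Phi_atBot.comp tendsto_neg_atTop_atBot)
  have h3 : Tendsto (fun s => stdGaussianCDF s + stdGaussianCDF (-s)) atTop
      (𝓝 (stdGaussianCDF t + stdGaussianCDF (-t))) := by
    refine tendsto_const_nhds.congr fun s => ?_
    exact hconst t s
  have := tendsto_nhds_unique h3 hl
  linarith

lemma Phi_tail {t : ℝ} (ht : 0 ≤ t) : 1 - Real.exp (-t ^ 2 / 2) ≤ stdGaussianCDF t := by
  have h := ProbabilityTheory.measure_ge_le_exp_mul_mgf (X := id)
    (μ := ProbabilityTheory.gaussianReal 0 1) (t := t) t ht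
    (ProbabilityTheory.integrable_exp_mul_gaussianReal t)
  rw [ProbabilityTheory.mgf_id_gaussianReal, ← Real.exp_add] at h
  have e : -t * t + (0 * t + ((1 : NNReal) : ℝ) * t ^ 2 / 2) = -t ^ 2 / 2 := by
    simp; ring
  rw [e] at h
  have h2 : stdGaussianCDF t = 1 - (ProbabilityTheory.gaussianReal 0 1).real (Ioi t) := by
    rw [Phi_eq_real, ← compl_Iic, MeasureTheory.probReal_compl_eq_one_sub measurableSet_Iic]
    ring
  have h3 : (ProbabilityTheory.gaussianReal 0 1).real (Ioi t) ≤
      (ProbabilityTheory.gaussianReal 0 1).real {ω | t ≤ id ω} :=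
    MeasureTheory.measureReal_mono (fun x hx => le_of_lt (mem_Ioi.1 hx))
  linarith

noncomputable def bP (n k : ℕ) (p : ℝ) : ℝ :=
  ∑ m ∈ Finset.range k, (n.choose m : ℝ) * p ^ m * (1 - p) ^ (n - m)

lemma bP_hasDeriv (n k : ℕ) (hk : k ≤ n) (p : ℝ) :
    HasDerivAt (bP n k) (-((k * n.choose k : ℝ) * p ^ (k - 1) * (1 - p) ^ (n - k))) p := by
  induction k with
  | zero => 
    have : bP n 0 = fun _ => 0 := by ext; simp [bP]
    rw [this]; simpa using hasDerivAt_const p (0:ℝ)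
  | succ k ih =>
    have ih := ih (by omega)
    have e : bP n (k + 1) = fun x => bP n k x + (n.choose k : ℝ) * x ^ k * (1 - x) ^ (n - k) := by
      ext x; simp [bP, Finset.sum_range_succ]
    rw [e]
    have d1 := ((hasDerivAt_pow k p).const_mul (n.choose k : ℝ)).mul
      (((hasDerivAt_id p).const_sub 1).pow (n - k))
    refine (ih.add d1).congr_deriv ?_
    have hc : (n.choose (k + 1) : ℝ) * (k + 1) = n.choose k * ((n - k : ℕ) : ℝ) := by
      exact_mod_cast Nat.choose_succ_right_eq n k
    have : n - (k + 1) = n - k - 1 := by omega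
    rw [this]
    simp
    linear_combination (p ^ k * (1 - p) ^ (n - k - 1)) * hc

lemma bP_one (n k : ℕ) (hk : k ≤ n) : bP n k 1 = 0 := by
  unfold bP
  apply Finset.sum_eq_zero
  intro m hm
  have : n - m ≠ 0 := by have := Finset.mem_range.1 hm; omega
  simp [this]

lemma bP_zero (n k : ℕ) (hk : 0 < k) : bP n k 0 = 1 := by
  unfold bP
  rw [Finset.sum_eq_single 0]
  · simp
  · intro m _ hm; simp [hm]
  · intro h; simp at h; omega

lemma bP_full (n : ℕ) (p : ℝ) : bP n (n + 1) p = 1 := by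
  have := add_pow p (1 - p) n
  unfold bP
  rw [add_sub_cancel, one_pow] at this
  refine Eq.trans ?_ this.symm
  exact Finset.sum_congr rfl fun m _ => by ring

lemma bP_flip (n k : ℕ) (hk : k ≤ n) (p : ℝ) : bP n (n - k) (1 - p) = 1 - bP n (k + 1) p := by
  have h1 := bP_full n p
  have h2 : bP n (n + 1) p = bP n (k + 1) p +
      ∑ m ∈ Finset.range (n - k), (n.choose (k + 1 + m) : ℝ) * p ^ (k + 1 + m) *
        (1 - p) ^ (n - (k + 1 + m)) := by
    unfold bP
    rw [← Finset.sum_range_add]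
    congr 2; omega
  have h3 : bP n (n - k) (1 - p) = ∑ m ∈ Finset.range (n - k), (n.choose (k + 1 + m) : ℝ) *
      p ^ (k + 1 + m) * (1 - p) ^ (n - (k + 1 + m)) := by
    unfold bP
    rw [← Finset.sum_range_reflect]
    apply Finset.sum_congr rfl
    intro m hm
    have hm := Finset.mem_range.1 hm
    have e1 : n - k - 1 - m = n - (k + 1 + m) := by omega
    have e2 : n - (n - (k + 1 + m)) = k + 1 + m := by omega
    rw [e1, e2, Nat.choose_symm (by omega)]
    simp only [sub_sub_cancel]; ring
  linarith

lemma SLL_eq (n : ℕ) (p : ℝ) (k : ℕ) : binomialSLL n p k =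
    if (k : ℝ) / n < p then -Real.sqrt (2 * (n * bD ((k:ℝ) / n) p))
    else Real.sqrt (2 * (n * bD ((k:ℝ) / n) p)) := rfl

lemma exp_bD {n k : ℕ} (hk0 : 0 < k) (hk : k < n) {p : ℝ} (hp : 0 < p) (hp1 : p < 1) :
    Real.exp (-(n * bD ((k:ℝ) / n) p)) =
     Real.exp (-(n * ((k:ℝ) / n * Real.log ((k:ℝ) / n) +
        (1 - (k:ℝ) / n) * Real.log (1 - (k:ℝ) / n)))) * (p ^ k * (1 - p) ^ (n - k)) := by
  have hn : (0:ℝ) < n := by exact_mod_cast hk0.trans hk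
  have hk' : (k:ℝ) < n := by exact_mod_cast hk
  have hk0' : (0:ℝ) < k := by exact_mod_cast hk0
  have hq1 : 0 < 1 - (k:ℝ) / n := by rw [sub_pos, div_lt_one hn]; exact hk'
  have hp' : 0 < 1 - p := by linarith
  have e1 : p ^ k = Real.exp (k * Real.log p) := by rw [Real.exp_nat_mul, Real.exp_log hp]
  have e2 : (1 - p) ^ (n - k) = Real.exp (((n:ℝ) - k) * Real.log (1 - p)) := by
    rw [← Nat.cast_sub hk.le, Real.exp_nat_mul, Real.exp_log hp']
  rw [e1, e2, ← Real.exp_add, ← Real.exp_add]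
  congr 1
  unfold bD
  rw [Real.log_div (by positivity) hp.ne', Real.log_div hq1.ne' hp'.ne']
  field_simp
  ring

lemma bD_atZero {q : ℝ} (h0 : 0 < q) (h1 : q < 1) : Tendsto (bD q) (𝓝[>] 0) atTop := by
  unfold bD
  have a2 : 0 < 1 - q := by linarith
  apply Tendsto.atTop_add (C := (1 - q) * Real.log ((1 - q) / (1 - 0)))
  · apply Tendsto.const_mul_atTop h0
    apply Real.tendsto_log_atTop.comp
    exact (tendsto_inv_nhdsGT_zero (𝕜 := ℝ)).const_mul_atTop h0
  · have : ContinuousAt (fun x : ℝ => (1 - q) * Real.log ((1 - q) / (1 - x))) 0 := by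
      refine ContinuousAt.mul continuousAt_const (ContinuousAt.log ?_ (by simp; exact a2.ne'))
      exact ContinuousAt.div continuousAt_const (by fun_prop) (by simp)
    exact this.tendsto.mono_left nhdsWithin_le_nhds

lemma bD_atOne {q : ℝ} (h0 : 0 < q) (h1 : q < 1) : Tendsto (bD q) (𝓝[<] 1) atTop := by
  have h := bD_atZero (q := 1 - q) (by linarith) (by linarith)
  have h2 : Tendsto (fun x : ℝ => 1 - x) (𝓝[<] 1) (𝓝[>] 0) := by
    refine tendsto_nhdsWithin_iff.2 ⟨?_, ?_⟩
    · have : ContinuousAt (fun x : ℝ => 1 - x) 1 := by fun_prop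
      have := this.tendsto.mono_left (nhdsWithin_le_nhds (s := Iio 1))
      simpa using this
    · filter_upwards [self_mem_nhdsWithin] with x hx
      simpa using hx
  refine (h.comp h2).congr fun x => bD_symm q x

lemma main_mid {n k : ℕ} (hk0 : 0 < k) (hk : k < n) {p : ℝ} (hp : 0 < p) (hp1 : p < 1) :
    bP n k p ≤ stdGaussianCDF (binomialSLL n p k) := by
  have hn : (0:ℝ) < n := by exact_mod_cast hk0.trans hk
  have hk' : (k:ℝ) < n := by exact_mod_cast hk
  have hk0' : (0:ℝ) < k := by exact_mod_cast hk0
  obtain ⟨q, hq⟩ : ∃ q : ℝ, q = (k:ℝ) / n := ⟨_, rfl⟩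
  have h0 : 0 < q := by rw [hq]; positivity
  have h1 : q < 1 := by rw [hq, div_lt_one hn]; exact hk'
  obtain ⟨C, hC⟩ : ∃ C : ℝ, C = Real.exp (-(n * ((k:ℝ) / n * Real.log ((k:ℝ) / n) +
        (1 - (k:ℝ) / n) * Real.log (1 - (k:ℝ) / n)))) := ⟨_, rfl⟩
  have hC0 : 0 < C := hC ▸ Real.exp_pos _
  have hexp : ∀ x, 0 < x → x < 1 → Real.exp (-(n * bD q x)) = C * (x ^ k * (1 - x) ^ (n - k)) := by
    intro x hx hx1; rw [hq, hC]; exact exp_bD hk0 hk hx hx1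
  have hS1 : ∀ x, x ≤ q → binomialSLL n x k = Real.sqrt (2 * (n * bD q x)) := by
    intro x hx; rw [SLL_eq, ← hq, if_neg (not_lt.2 hx)]
  have hS2 : ∀ x, q ≤ x → binomialSLL n x k = -Real.sqrt (2 * (n * bD q x)) := by
    intro x hx
    rcases hx.eq_or_lt with rfl | hx
    · rw [hS1 _ le_rfl, bD_self h0 h1]; simp
    · rw [SLL_eq, ← hq, if_pos hx]
  have hPc : Continuous (bP n k) :=
    continuous_iff_continuousAt.2 fun x => (bP_hasDeriv n k hk.le x).continuousAt
  have hΦc : Continuous stdGaussianCDF :=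
    continuous_iff_continuousAt.2 fun x => (Phi_hasDeriv x).continuousAt
  have hDc : ∀ x, 0 < x → x < 1 → ContinuousAt (bD q) x := fun x a b =>
    (bD_hasDeriv h0 h1 a b).continuousAt
  obtain ⟨B, hB⟩ : ∃ B : ℝ, B = C * n / (Real.sqrt (2 * Real.pi) * Real.sqrt (2 * n)) := ⟨_, rfl⟩
  have hB0 : 0 < B := by rw [hB]; have := Real.pi_pos; positivity
  have key := unimodal (F := fun x => stdGaussianCDF (binomialSLL n x k) - bP n k x)
    (w := fun x => x ^ (k - 1) * (1 - x) ^ (n - k))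
    (g := fun x => (k * n.choose k : ℝ) - B / Real.sqrt (bR q x)) h0 h1
    ?_ ?_ ?_ ?_ ?_ ?_ ?_ p hp hp1
  · simpa using key
  · refine ContinuousOn.sub (hΦc.comp_continuousOn ?_) hPc.continuousOn
    refine ContinuousOn.congr (f := fun x => Real.sqrt (2 * (n * bD q x))) ?_ (fun x hx => hS1 x hx.2)
    have : ContinuousOn (bD q) (Ioc 0 q) := fun x hx =>
      (hDc x hx.1 (hx.2.trans_lt h1)).continuousWithinAt
    fun_prop
  · refine ContinuousOn.sub (hΦc.comp_continuousOn ?_) hPc.continuousOn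
    refine ContinuousOn.congr (f := fun x => -Real.sqrt (2 * (n * bD q x))) ?_ (fun x hx => hS2 x hx.1)
    have : ContinuousOn (bD q) (Ico q 1) := fun x hx =>
      (hDc x (h0.trans_le hx.1) hx.2).continuousWithinAt
    fun_prop
  · intro x hx0 hx1 hxq
    have hDp := bD_pos h0 h1 hx0 hx1 hxq
    have hx1' : 0 < 1 - x := by linarith
    have dS := ((((bD_hasDeriv h0 h1 hx0 hx1).const_mul (n:ℝ)).const_mul 2).sqrt
      (by positivity : (2 * (n * bD q x)) ≠ 0))
    have hsq : Real.sqrt (2 * (n * bD q x)) ^ 2 = 2 * (n * bD q x) := Real.sq_sqrt (by positivity)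
    have hs : Real.sqrt (2 * (n * bD q x)) = Real.sqrt (2 * n) * Real.sqrt (bD q x) := by
      rw [← Real.sqrt_mul (by positivity)]; ring_nf
    have hφ : Real.exp (-Real.sqrt (2 * (n * bD q x)) ^ 2 / 2) =
        C * (x ^ (k - 1) * x * (1 - x) ^ (n - k)) := by
      rw [hsq, ← pow_succ, Nat.sub_add_cancel hk0, ← hexp x hx0 hx1]
      congr 1; ring
    have hsn : 0 < Real.sqrt (2 * n) := by positivity
    have hsD : 0 < Real.sqrt (bD q x) := by positivity
    have hsp : 0 < Real.sqrt (2 * Real.pi) := by have := Real.pi_pos; positivity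
    rcases lt_or_gt_of_ne hxq with hlt | hgt
    · have hR : Real.sqrt (bR q x) = (1 - x) * Real.sqrt (bD q x) / (q - x) := by
        unfold bR
        rw [Real.sqrt_div (by positivity), Real.sqrt_mul (by positivity), Real.sqrt_sq hx1'.le,
          Real.sqrt_sq (by linarith)]
      have dG : HasDerivAt (fun y => binomialSLL n y k) _ x :=
        dS.congr_of_eventuallyEq (by
          filter_upwards [Iio_mem_nhds hlt] with y hy using hS1 y (le_of_lt hy))
      have := ((Phi_hasDeriv _).comp x dG).sub (bP_hasDeriv n k hk.le x)
      refine this.congr_deriv ?_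
      rw [hS1 x hlt.le, hφ, hR, hs, hB]
      have : q - x ≠ 0 := by linarith
      field_simp
      ring
    · have hR : Real.sqrt (bR q x) = (1 - x) * Real.sqrt (bD q x) / (x - q) := by
        unfold bR
        rw [Real.sqrt_div (by positivity), Real.sqrt_mul (by positivity), Real.sqrt_sq hx1'.le,
          show (q - x) ^ 2 = (x - q) ^ 2 by ring, Real.sqrt_sq (by linarith)]
      have dG : HasDerivAt (fun y => binomialSLL n y k) _ x :=
        dS.neg.congr_of_eventuallyEq (by
          filter_upwards [Ioi_mem_nhds hgt] with y hy using hS2 y (le_of_lt hy))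
      have := ((Phi_hasDeriv _).comp x dG).sub (bP_hasDeriv n k hk.le x)
      refine this.congr_deriv ?_
      rw [hS2 x hgt.le, neg_sq, hφ, hR, hs, hB]
      have : x - q ≠ 0 := by linarith
      field_simp
      ring
  · intro x hx0 hx1
    have hx1' : 0 < 1 - x := by linarith
    positivity
  · intro x y hx0 hy1 hxq hyq hxy
    have hR := bR_anti h0 h1 hx0 hy1 hxq hyq hxy
    have hRy := bR_pos h0 h1 (hx0.trans_le hxy) hy1 hyq
    have := Real.sqrt_pos.2 hRy
    show _ - _ ≤ _ - _
    gcongr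
  · have hG : Tendsto (fun x => binomialSLL n x k) (𝓝[>] 0) atTop := by
      have : Tendsto (fun x => Real.sqrt (2 * (n * bD q x))) (𝓝[>] 0) atTop :=
        Real.tendsto_sqrt_atTop.comp
          (((bD_atZero h0 h1).const_mul_atTop hn).const_mul_atTop two_pos)
      refine this.congr' ?_
      filter_upwards [Ioo_mem_nhdsGT h0] with x hx using (hS1 x hx.2.le).symm
    have hP : Tendsto (bP n k) (𝓝[>] 0) (𝓝 1) := by
      rw [← bP_zero n k hk0]
      exact hPc.continuousAt.tendsto.mono_left nhdsWithin_le_nhds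
    simpa using (Phi_atTop.comp hG).sub hP
  · have hG : Tendsto (fun x => binomialSLL n x k) (𝓝[<] 1) atBot := by
      have : Tendsto (fun x => Real.sqrt (2 * (n * bD q x))) (𝓝[<] 1) atTop :=
        Real.tendsto_sqrt_atTop.comp
          (((bD_atOne h0 h1).const_mul_atTop hn).const_mul_atTop two_pos)
      refine (tendsto_neg_atTop_atBot.comp this).congr' ?_
      filter_upwards [Ioo_mem_nhdsLT h1] with x hx using (hS2 x hx.1.le).symm
    have hP : Tendsto (bP n k) (𝓝[<] 1) (𝓝 0) := by
      rw [← bP_one n k hk.le]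
      exact hPc.continuousAt.tendsto.mono_left nhdsWithin_le_nhds
    simpa using (Phi_atBot.comp hG).sub hP

lemma main_left {n k : ℕ} (hk : k ≤ n) {p : ℝ} (hp : 0 < p) (hp1 : p < 1) :
    bP n k p ≤ stdGaussianCDF (binomialSLL n p k) := by
  rcases Nat.eq_zero_or_pos k with rfl | hk0
  · simpa [bP] using Phi_nonneg _
  rcases hk.lt_or_eq with hlt | rfl
  · exact main_mid hk0 hlt hp hp1
  · have hk0' : (0:ℝ) < k := by exact_mod_cast hk0
    have h1 := bP_full k p
    have h2 : bP k (k + 1) p = bP k k p + p ^ k := by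
      simp [bP, Finset.sum_range_succ]
    have hS : binomialSLL k p k = Real.sqrt (2 * (k * (-Real.log p))) := by
      rw [SLL_eq, div_self hk0'.ne', if_neg (by linarith)]
      simp [bD]
    have hl : Real.log p < 0 := Real.log_neg hp hp1
    have h3 := Phi_tail (Real.sqrt_nonneg (2 * (k * (-Real.log p))))
    rw [Real.sq_sqrt (by have : 0 < -Real.log p := by linarith
                         positivity)] at h3
    have e : Real.exp (-(2 * (k * (-Real.log p))) / 2) = p ^ k := by
      rw [show -(2 * (k * (-Real.log p))) / 2 = k * Real.log p by ring, Real.exp_nat_mul,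
        Real.exp_log hp]
    rw [hS]
    rw [e] at h3
    linarith

lemma SLL_flip {n k : ℕ} (hn : 0 < n) (hk : k ≤ n) {p : ℝ} (hp : 0 < p) (hp1 : p < 1) :
    binomialSLL n (1 - p) (n - k) = -binomialSLL n p k := by
  have hn' : (0:ℝ) < n := by exact_mod_cast hn
  have e : ((n - k : ℕ) : ℝ) / n = 1 - (k:ℝ) / n := by
    rw [Nat.cast_sub hk]; field_simp
  rw [SLL_eq, SLL_eq, e, bD_symm]
  rcases lt_trichotomy ((k:ℝ) / n) p with h | h | h
  · rw [if_neg (by linarith), if_pos h]; simp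
  · rw [h, bD_self hp hp1]; simp
  · rw [if_pos (by linarith), if_neg (by linarith)]

theorem binomial_intersection (n : ℕ) (p : ℝ) (hp : 0 < p) (hp1 : p < 1)
    (k : ℕ) (hk : k ≤ n) :
    (∑ m ∈ Finset.range k, (n.choose m : ℝ) * p ^ m * (1 - p) ^ (n - m)) ≤
        stdGaussianCDF (binomialSLL n p k) ∧
      stdGaussianCDF (binomialSLL n p k) ≤
        ∑ m ∈ Finset.range (k + 1), (n.choose m : ℝ) * p ^ m * (1 - p) ^ (n - m) := by
  refine ⟨main_left hk hp hp1, ?_⟩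
  change _ ≤ bP n (k + 1) p
  rcases Nat.eq_zero_or_pos n with rfl | hn
  · obtain rfl : k = 0 := by omega
    rw [bP_full]
    have := Phi_neg (binomialSLL 0 p 0)
    linarith [Phi_nonneg (-binomialSLL 0 p 0)]
  · have h := main_left (n := n) (k := n - k) (by omega) (p := 1 - p) (by linarith) (by linarith)
    rw [SLL_flip hn hk hp hp1, Phi_neg, bP_flip n k hk] at h
    linarith
end
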